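/- Let (A,Λ) be any associative form ring, let (I,Γ) and (J,Δ) be two form ideals of (A,Λ), and let n ≥ 3. Then the mixed commutator subgroup [FU(2n,I,Γ), FU(2n,J,Δ)] is a normal subgroup of EU(2n,A,Λ), and moreover [FU(2n,I,Γ), FU(2n,J,Δ)] = [EU(2n,I,Γ), EU(2n,J,Δ)]. -/

import Mathlib

open Matrix
open scoped commutatorElement

/-- Bak's form ring data on a ring `A`: an involution `bar`, a central symmetry
`λ` with `λ λ̄ = 1`, and a form parameter `Λ`. -/
structure FormRingData (A : Type*) [Ring A] where
  bar : A →+ A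
  bar_mul : ∀ a b : A, bar (a * b) = bar b * bar a
  bar_bar : ∀ a : A, bar (bar a) = a
  lam : A
  lam_comm : ∀ a : A, lam * a = a * lam
  lam_bar : lam * bar lam = 1
  Lambda : AddSubgroup A
  lambdaMin_mem : ∀ c : A, c - lam * bar c ∈ Lambda
  lambdaMax_mem : ∀ x ∈ Lambda, x = -(lam * bar x)
  lambda_conj : ∀ (c : A), ∀ x ∈ Lambda, c * x * bar c ∈ Lambda

namespace FormRingData

variable {A : Type*} [Ring A]

/-- Integral powers of the symmetry `λ`; negative powers use `λ̄ = λ⁻¹`. -/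
def lpow (D : FormRingData A) (k : ℤ) : A :=
  if 0 ≤ k then D.lam ^ k.toNat else (D.bar D.lam) ^ (-k).toNat

end FormRingData

/-- The index set `Ω = {1,…,n,−n,…,−1}`, coded as `Fin n × Bool`
(second component `true` = positive index). -/
abbrev Idx (n : ℕ) := Fin n × Bool

namespace Idx

/-- The involution `i ↦ −i` on indices. -/
def neg {n : ℕ} (i : Idx n) : Idx n := (i.1, !i.2)

/-- The sign `ε(i) ∈ {±1}`. -/
def eps {n : ℕ} (i : Idx n) : ℤ := if i.2 then 1 else -1

theorem neg_ne {n : ℕ} (i : Idx n) : neg i ≠ i := by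
  simp [neg, Prod.ext_iff]

theorem neg_injective {n : ℕ} : Function.Injective (neg (n := n)) := by
  intro i j h
  simp only [neg, Prod.mk.injEq] at h
  refine Prod.ext h.1 ?_
  have h2 := h.2
  cases hi : i.2 <;> cases hj : j.2 <;> simp_all

theorem neg_neg {n : ℕ} (i : Idx n) : neg (neg i) = i := by
  simp [neg]

end Idx

/-- `GL(2n, A)`, realised as the units of the `Ω × Ω` matrix ring over `A`. -/
abbrev GLn (A : Type*) [Ring A] (n : ℕ) := (Matrix (Idx n) (Idx n) A)ˣ

section aux

theorem one_add_mul_one_sub {R : Type*} [Ring R] {X : R} (h : X * X = 0) :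
    (1 + X) * (1 - X) = 1 := by
  have hh : (1 + X) * (1 - X) = 1 - X * X := by noncomm_ring
  rw [hh, h, sub_zero]

theorem one_sub_mul_one_add {R : Type*} [Ring R] {X : R} (h : X * X = 0) :
    (1 - X) * (1 + X) = 1 := by
  have hh : (1 - X) * (1 + X) = 1 - X * X := by noncomm_ring
  rw [hh, h, sub_zero]

theorem stdBasisMatrix_neg' {A : Type*} [Ring A] {n : ℕ} (i j : Idx n) (c : A) :
    Matrix.single i j (-c) = -Matrix.single i j c := by
  refine eq_neg_of_add_eq_zero_left ?_
  rw [← Matrix.single_add]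
  simp

end aux

namespace FormRingData

variable {A : Type*} [Ring A] {n : ℕ}

/-- The off-diagonal part of a short root element. -/
def Xmat (D : FormRingData A) (i j : Idx n) (c : A) : Matrix (Idx n) (Idx n) A :=
  Matrix.single i j c -
    Matrix.single (Idx.neg j) (Idx.neg i) (D.lpow ((Idx.eps j - Idx.eps i) / 2) * D.bar c)

theorem Xmat_mul (D : FormRingData A) {i j : Idx n} (hij : i ≠ j) (c c' : A) :
    D.Xmat i j c * D.Xmat i j c' = 0 := by
  unfold Xmat
  rw [sub_mul, mul_sub, mul_sub,
    Matrix.single_mul_single_of_ne _ _ _ _ (Ne.symm hij),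
    Matrix.single_mul_single_of_ne _ _ _ _ (Ne.symm (Idx.neg_ne j)),
    Matrix.single_mul_single_of_ne _ _ _ _ (Idx.neg_ne i),
    Matrix.single_mul_single_of_ne _ _ _ _ (fun h => hij (Idx.neg_injective h))]
  simp

theorem Xmat_neg (D : FormRingData A) (i j : Idx n) (c : A) :
    D.Xmat i j (-c) = -D.Xmat i j c := by
  unfold Xmat
  rw [map_neg, mul_neg, stdBasisMatrix_neg', stdBasisMatrix_neg']
  abel

/-- The elementary short root unipotent `T_{ij}(c)`, for `i ≠ ±j`
(with junk value `1` when `i = j`). -/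
def TS (D : FormRingData A) (i j : Idx n) (c : A) : GLn A n :=
  if h : i = j then 1 else
    { val := 1 + D.Xmat i j c
      inv := 1 + D.Xmat i j (-c)
      val_inv := by
        rw [D.Xmat_neg, ← sub_eq_add_neg]
        exact one_add_mul_one_sub (D.Xmat_mul h c c)
      inv_val := by
        rw [D.Xmat_neg, ← sub_eq_add_neg]
        exact one_sub_mul_one_add (D.Xmat_mul h c c) }

/-- The elementary long root unipotent `T_{i,−i}(c)`. -/
def TL (D : FormRingData A) (i : Idx n) (c : A) : GLn A n where
  val := 1 + Matrix.single i (Idx.neg i) c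
  inv := 1 + Matrix.single i (Idx.neg i) (-c)
  val_inv := by
    rw [stdBasisMatrix_neg', ← sub_eq_add_neg]
    exact one_add_mul_one_sub (Matrix.single_mul_single_of_ne _ _ _ _ (Idx.neg_ne i) _)
  inv_val := by
    rw [stdBasisMatrix_neg', ← sub_eq_add_neg]
    exact one_sub_mul_one_add (Matrix.single_mul_single_of_ne _ _ _ _ (Idx.neg_ne i) _)

/-- The elementary unitary transvection `T_{ij}(c)` (long or short root type
according to whether `j = −i`). -/
def T (D : FormRingData A) (i j : Idx n) (c : A) : GLn A n :=
  if j = Idx.neg i then D.TL i c else D.TS i j c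

/-- The elementary commutator `Y_{ij}(a,b) = [T_{ij}(a), T_{ji}(b)]`. -/
def Y (D : FormRingData A) (i j : Idx n) (a b : A) : GLn A n :=
  ⁅D.T i j a, D.T j i b⁆

/-- The elementary conjugate `Z_{ij}(a,c) = T_{ji}(c) T_{ij}(a) T_{ji}(−c)`. -/
def Z (D : FormRingData A) (i j : Idx n) (a c : A) : GLn A n :=
  D.T j i c * D.T i j a * D.T j i (-c)

/-- The set of elementary unitary transvections of level `(I,Γ)`. -/
def transvGen (D : FormRingData A) (n : ℕ) (I Γ : AddSubgroup A) : Set (GLn A n) :=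
  {x | ∃ i j : Idx n, i ≠ j ∧ i ≠ Idx.neg j ∧ ∃ c ∈ I, x = D.TS i j c} ∪
    {x | ∃ i : Idx n, ∃ g ∈ Γ, x = D.TL i (D.lpow (-(Idx.eps i + 1) / 2) * g)}

/-- The unrelative elementary subgroup `FU(2n, I, Γ)`. -/
def FU (D : FormRingData A) (n : ℕ) (I Γ : AddSubgroup A) : Subgroup (GLn A n) :=
  Subgroup.closure (D.transvGen n I Γ)

/-- The absolute elementary unitary group `EU(2n, A, Λ)`. -/
def EUmax (D : FormRingData A) (n : ℕ) : Subgroup (GLn A n) :=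
  D.FU n ⊤ D.Lambda

/-- The relative elementary subgroup `EU(2n, I, Γ)`: the normal closure of
`FU(2n, I, Γ)` in `EU(2n, A, Λ)`. -/
def EU (D : FormRingData A) (n : ℕ) (I Γ : AddSubgroup A) : Subgroup (GLn A n) :=
  Subgroup.closure {x | ∃ g ∈ D.EUmax n, ∃ t ∈ D.transvGen n I Γ, x = g * t * g⁻¹}

/-- The additive subgroup generated by products `st`, `s ∈ S`, `t ∈ T`. -/
def mulSub (S T : AddSubgroup A) : AddSubgroup A :=
  AddSubgroup.closure {x | ∃ a ∈ S, ∃ b ∈ T, x = a * b}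

/-- The symmetrised product `ST + TS` of two (additive subgroups underlying)
two-sided ideals. -/
def symI (S T : AddSubgroup A) : AddSubgroup A :=
  mulSub S T ⊔ mulSub T S

/-- The minimal relative form parameter `Γ_min(K)` of level `K`. -/
def gammaMin (D : FormRingData A) (K : AddSubgroup A) : AddSubgroup A :=
  AddSubgroup.closure
    ({x | ∃ a ∈ K, x = a - D.lam * D.bar a} ∪
      {x | ∃ a ∈ K, ∃ c ∈ D.Lambda, x = a * c * D.bar a})

/-- The relative form parameter `ˢΓ = ⟨ b γ b̄ ∣ b ∈ S, γ ∈ Γ ⟩`. -/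
def conjPar (D : FormRingData A) (S Γ : AddSubgroup A) : AddSubgroup A :=
  AddSubgroup.closure {x | ∃ b ∈ S, ∃ g ∈ Γ, x = b * g * D.bar b}

/-- The relative form parameter of the symmetrised product
`(I,Γ)∘(J,Δ) = (IJ+JI, Γ_min(IJ+JI) + ᴶΓ + ᴵΔ)`. -/
def symG (D : FormRingData A) (I Γ J Δ : AddSubgroup A) : AddSubgroup A :=
  D.gammaMin (symI I J) ⊔ D.conjPar J Γ ⊔ D.conjPar I Δ

/-- The elementary subgroup `EU(2n, (I,Γ)∘(J,Δ))` of the symmetrised product. -/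
def EUsym (D : FormRingData A) (n : ℕ) (I Γ J Δ : AddSubgroup A) : Subgroup (GLn A n) :=
  D.EU n (symI I J) (D.symG I Γ J Δ)

/-- Position-dependent membership `a ∈ (I,Γ)` at position `(i,j)`:
`a ∈ I` for a short root position, `a ∈ λ^{−(ε(i)+1)/2}Γ` for a long one. -/
def pmem (D : FormRingData A) (I Γ : AddSubgroup A) {n : ℕ} (i j : Idx n) (a : A) : Prop :=
  if j = Idx.neg i then ∃ g ∈ Γ, a = D.lpow (-(Idx.eps i + 1) / 2) * g else a ∈ I

end FormRingData

/-- A form ideal `(I,Γ)` of the form ring `(A,Λ)`. -/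
structure FormIdeal {A : Type*} [Ring A] (D : FormRingData A) where
  I : AddSubgroup A
  Gamma : AddSubgroup A
  mul_mem_left : ∀ (c : A), ∀ x ∈ I, c * x ∈ I
  mul_mem_right : ∀ (c : A), ∀ x ∈ I, x * c ∈ I
  bar_mem : ∀ x ∈ I, D.bar x ∈ I
  gammaMin_le : D.gammaMin I ≤ Gamma
  gamma_le_I : Gamma ≤ I
  gamma_le_Lambda : Gamma ≤ D.Lambda
  gamma_conj : ∀ (c : A), ∀ x ∈ Gamma, c * x * D.bar c ∈ Gamma

set_option linter.unusedSimpArgs false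
set_option linter.unusedVariables false

namespace FormRingData

variable {A : Type*} [Ring A] {n : ℕ}

/-- The scalar at a long root position. -/
def s (D : FormRingData A) (i : Idx n) : A := if i.2 then D.bar D.lam else 1

theorem bar_one (D : FormRingData A) : D.bar 1 = 1 := by
  have h := D.bar_mul 1 (D.bar 1)
  rw [D.bar_bar, one_mul, D.bar_bar] at h
  exact h.symm

theorem bar_lam_comm (D : FormRingData A) (a : A) : D.bar D.lam * a = a * D.bar D.lam := by
  have h := congrArg D.bar (D.lam_comm (D.bar a))
  rw [D.bar_mul, D.bar_mul, D.bar_bar] at h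
  exact h.symm

theorem lam_bar' (D : FormRingData A) : D.bar D.lam * D.lam = 1 := by
  rw [← D.lam_comm, D.lam_bar]

theorem s_comm (D : FormRingData A) (i : Idx n) (a : A) : D.s i * a = a * D.s i := by
  unfold s; split_ifs
  · exact D.bar_lam_comm a
  · simp

theorem bs_comm (D : FormRingData A) (i : Idx n) (a : A) :
    D.bar (D.s i) * a = a * D.bar (D.s i) := by
  unfold s; split_ifs
  · rw [D.bar_bar]; exact D.lam_comm a
  · simp [D.bar_one]

theorem s_bar (D : FormRingData A) (i : Idx n) : D.s i * D.bar (D.s i) = 1 := by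
  unfold s; split_ifs
  · rw [D.bar_bar, D.lam_bar']
  · simp [D.bar_one]

theorem bar_s (D : FormRingData A) (i : Idx n) : D.bar (D.s i) * D.s i = 1 := by
  rw [← D.s_comm, s_bar]

theorem s_neg (D : FormRingData A) (i : Idx n) :
    D.s (Idx.neg i) = D.bar D.lam * D.bar (D.s i) := by
  unfold s Idx.neg
  cases h : i.2 <;> simp [D.bar_bar, D.lam_bar', D.bar_one]

theorem bs_neg (D : FormRingData A) (i : Idx n) :
    D.bar (D.s (Idx.neg i)) = D.lam * D.s i := by
  rw [s_neg, D.bar_mul, D.bar_bar, D.bar_bar, D.lam_comm]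

theorem lpow_long (D : FormRingData A) (i : Idx n) :
    D.lpow (-(Idx.eps i + 1) / 2) = D.s i := by
  unfold s Idx.eps lpow
  cases h : i.2 <;> simp

theorem lpow_short (D : FormRingData A) (i j : Idx n) :
    D.lpow ((Idx.eps j - Idx.eps i) / 2) = D.s i * D.bar (D.s j) := by
  unfold s Idx.eps lpow
  cases h : i.2 <;> cases h' : j.2 <;> simp [D.bar_bar, D.lam_bar', D.bar_one]

theorem neg_eq_neg {i j : Idx n} : Idx.neg i = Idx.neg j ↔ i = j :=
  ⟨fun h => Idx.neg_injective h, fun h => h ▸ rfl⟩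

theorem neg_eq {i j : Idx n} : Idx.neg i = j ↔ i = Idx.neg j :=
  ⟨fun h => by rw [← h, Idx.neg_neg], fun h => by rw [h, Idx.neg_neg]⟩

theorem TS_val (D : FormRingData A) {i j : Idx n} (h : i ≠ j) (c : A) :
    (D.TS i j c : Matrix (Idx n) (Idx n) A) =
      1 + (Matrix.single i j c -
        Matrix.single (Idx.neg j) (Idx.neg i) (D.s i * D.bar (D.s j) * D.bar c)) := by
  unfold TS; rw [dif_neg h, ← lpow_short]; rfl

theorem TL_val (D : FormRingData A) (i : Idx n) (c : A) :
    (D.TL i c : Matrix (Idx n) (Idx n) A) = 1 + Matrix.single i (Idx.neg i) c := rfl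

theorem lc (D : FormRingData A) (a x : A) : a * (D.lam * x) = D.lam * (a * x) := by
  rw [← mul_assoc, ← D.lam_comm, mul_assoc]

theorem blc (D : FormRingData A) (a x : A) :
    a * (D.bar D.lam * x) = D.bar D.lam * (a * x) := by
  rw [← mul_assoc, ← D.bar_lam_comm, mul_assoc]

theorem lcan (D : FormRingData A) (x : A) : D.lam * (D.bar D.lam * x) = x := by
  rw [← mul_assoc, D.lam_bar, one_mul]

theorem blcan (D : FormRingData A) (x : A) : D.bar D.lam * (D.lam * x) = x := by
  rw [← mul_assoc, D.lam_bar', one_mul]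

theorem flip_aux (D : FormRingData A) (i j : Idx n) (c : A) :
    D.s (Idx.neg j) * D.bar (D.s (Idx.neg i)) *
      D.bar (D.s i * D.bar (D.s j) * D.bar c) = c := by
  have h1 := D.lam_comm c
  have h2 := D.bar_lam_comm c
  cases hi : i.2 <;> cases hj : j.2 <;>
    simp [s, Idx.neg, hi, hj, D.bar_mul, D.bar_bar, D.bar_one, mul_assoc, D.lam_bar, D.lam_bar',
      D.lcan, D.blcan, ← h1, ← h2]

theorem TS_flip (D : FormRingData A) {i j : Idx n} (h : i ≠ j) (c : A) :
    D.TS (Idx.neg j) (Idx.neg i) (-(D.s i * D.bar (D.s j) * D.bar c)) = D.TS i j c := by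
  apply Units.ext
  rw [D.TS_val h, D.TS_val (by rw [Ne, neg_eq_neg]; exact h.symm)]
  have e : D.s (Idx.neg j) * D.bar (D.s (Idx.neg i)) *
      D.bar (-(D.s i * D.bar (D.s j) * D.bar c)) = - c := by
    rw [map_neg, mul_neg]; congr 1
    exact D.flip_aux i j c
  rw [e]
  simp only [Idx.neg_neg, stdBasisMatrix_neg']
  abel

theorem sms (i j k l : Idx n) (a b : A) : Matrix.single i j a * Matrix.single k l b =
    if j = k then Matrix.single i l (a * b) else 0 := by
  split_ifs with h
  · subst h; simp
  · exact Matrix.single_mul_single_of_ne _ _ _ _ h _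

theorem ne_neg (i : Idx n) : i ≠ Idx.neg i := (Idx.neg_ne i).symm

theorem TS_add (D : FormRingData A) {i j : Idx n} (h : i ≠ j) (a b : A) :
    D.TS i j (a + b) = D.TS i j a * D.TS i j b := by
  apply Units.ext
  rw [Units.val_mul, D.TS_val h, D.TS_val h, D.TS_val h]
  have h2 := h.symm
  simp [mul_add, add_mul, mul_sub, sub_mul, Matrix.single_add, neg_eq_neg, h, h2,
    Idx.neg_ne, ne_neg, sms]
  abel

theorem TL_add (D : FormRingData A) (i : Idx n) (a b : A) :
    D.TL i (a + b) = D.TL i a * D.TL i b := by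
  apply Units.ext
  rw [Units.val_mul, TL_val, TL_val, TL_val]
  simp [mul_add, add_mul, Matrix.single_add, Idx.neg_ne, sms]
  abel

theorem comm_of_eq {G : Type*} [Group G] {x y z : G} (h : x * y = z * y * x) : ⁅x, y⁆ = z := by
  rw [commutatorElement_def, h]; group

/-- short-short, sum is a short root -/
theorem R4 (D : FormRingData A) {i j l : Idx n} (h1 : i ≠ j) (h2 : i ≠ Idx.neg j)
    (h3 : j ≠ l) (h4 : j ≠ Idx.neg l) (h5 : i ≠ l) (h6 : i ≠ Idx.neg l) (a b : A) :
    ⁅D.TS i j a, D.TS j l b⁆ = D.TS i l (a * b) := by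
  apply comm_of_eq
  apply Units.ext
  simp only [Units.val_mul]
  rw [D.TS_val h1, D.TS_val h3, D.TS_val h5]
  have e : D.s j * D.bar (D.s l) * D.bar b * (D.s i * D.bar (D.s j) * D.bar a) =
      D.s i * D.bar (D.s l) * D.bar (a * b) := by
    rw [D.bar_mul]
    have k1 := D.lam_comm (D.bar b)
    have k2 := D.bar_lam_comm (D.bar b)
    cases hi : i.2 <;> cases hj : j.2 <;> cases hl : l.2 <;>
    simp [s, hi, hj, hl, D.bar_bar, D.bar_one, mul_assoc, D.lam_bar, D.lam_bar',
      D.lcan, D.blcan, ← k1, ← k2, D.lc (D.bar b), D.blc (D.bar b)]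
  have h1' := h1.symm
  have h2' : j ≠ Idx.neg i := fun h => h2 (by rw [h, Idx.neg_neg])
  have h3' := h3.symm
  have h4' : l ≠ Idx.neg j := fun h => h4 (by rw [h, Idx.neg_neg])
  have h5' := h5.symm
  have h6' : l ≠ Idx.neg i := fun h => h6 (by rw [h, Idx.neg_neg])
  simp [mul_add, add_mul, mul_sub, sub_mul, neg_eq_neg, neg_eq, h1, h2, h3, h4, h5, h6,
    h1', h2', h3', h4', h5', h6', Idx.neg_ne, ne_neg, sms, e, Idx.neg_neg]
  abel

/-- short-short, sum is a long root -/
theorem R5 (D : FormRingData A) {i j : Idx n} (h1 : i ≠ j) (h2 : i ≠ Idx.neg j) (a b : A) :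
    ⁅D.TS i j a, D.TS j (Idx.neg i) b⁆ = D.TL i (D.s i * (D.bar (D.s i) * (a * b) -
      D.lam * D.bar (D.bar (D.s i) * (a * b)))) := by
  apply comm_of_eq
  apply Units.ext
  simp only [Units.val_mul]
  have h1' := h1.symm
  have h2' : j ≠ Idx.neg i := fun h => h2 (by rw [h, Idx.neg_neg])
  rw [D.TS_val h1, D.TS_val h2', D.TL_val]
  have e : D.s j * D.bar (D.s (Idx.neg i)) * D.bar b * (D.s i * D.bar (D.s j) * D.bar a) =
      D.s i * (D.lam * D.bar (D.bar (D.s i) * (a * b))) := by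
    rw [D.bar_mul, D.bar_mul, D.bar_bar]
    have k1 := D.lam_comm (D.bar b)
    have k2 := D.bar_lam_comm (D.bar b)
    have k3 := D.lam_comm (D.bar a)
    have k4 := D.bar_lam_comm (D.bar a)
    cases hi : i.2 <;> cases hj : j.2 <;>
    simp [s, Idx.neg, hi, hj, D.bar_bar, D.bar_one, mul_assoc, D.lam_bar, D.lam_bar',
      D.lcan, D.blcan, ← k1, ← k2, ← k3, ← k4, D.lc (D.bar b), D.blc (D.bar b), D.lc (D.bar a),
      D.blc (D.bar a)]
  have e2 : D.s i * (D.bar (D.s i) * (a * b)) = a * b := by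
    rw [← mul_assoc, s_bar, one_mul]
  rw [mul_sub, e2, ← e, sub_eq_add_neg (a * b), Matrix.single_add, stdBasisMatrix_neg']
  simp [mul_add, add_mul, mul_sub, sub_mul, neg_eq_neg, neg_eq, h1, h2,
    h1', h2', Idx.neg_ne, ne_neg, sms, Idx.neg_neg, mul_assoc]
  abel

/-- long-short -/
theorem R6 (D : FormRingData A) {i l : Idx n} (h1 : i ≠ l) (h2 : i ≠ Idx.neg l) (g b : A)
    (hg : g = -(D.lam * D.bar g)) :
    ⁅D.TL i (D.s i * g), D.TS (Idx.neg i) l b⁆ =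
      D.TS i l (D.s i * g * b) * D.TL (Idx.neg l) (D.s (Idx.neg l) * (-(D.bar b * g * b))) := by
  apply comm_of_eq
  apply Units.ext
  simp only [Units.val_mul]
  have h1' := h1.symm
  have h2' : l ≠ Idx.neg i := fun h => h2 (by rw [h, Idx.neg_neg])
  rw [D.TS_val h1, D.TS_val h2'.symm, D.TL_val, D.TL_val]
  have hg' : D.bar g = -(D.bar D.lam * g) := by
    conv_rhs => rw [hg]
    rw [mul_neg, neg_neg, D.blcan]
  have e : D.s i * D.bar (D.s l) * D.bar (D.s i * g * b) =
      - (D.s (Idx.neg l) * (D.bar b * g)) := by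
    rw [D.bar_mul, D.bar_mul, hg']
    have k1 := D.lam_comm (D.bar b)
    have k2 := D.bar_lam_comm (D.bar b)
    have k3 := D.lam_comm g
    have k4 := D.bar_lam_comm g
    cases hi : i.2 <;> cases hj : l.2 <;>
    simp [s, Idx.neg, hi, hj, D.bar_bar, D.bar_one, mul_assoc, D.lam_bar, D.lam_bar',
      D.lcan, D.blcan, ← k1, ← k2, ← k3, ← k4, D.lc (D.bar b), D.blc (D.bar b), D.lc g,
      D.blc g]
  have e3 : D.s (Idx.neg i) * D.bar (D.s l) * D.bar b * (D.s i * g) =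
      (D.s (Idx.neg l) * (D.bar b * g)) := by
    have k1 := D.lam_comm (D.bar b)
    have k2 := D.bar_lam_comm (D.bar b)
    have k3 := D.lam_comm g
    have k4 := D.bar_lam_comm g
    cases hi : i.2 <;> cases hj : l.2 <;>
    simp [s, Idx.neg, hi, hj, D.bar_bar, D.bar_one, mul_assoc, D.lam_bar, D.lam_bar',
      D.lcan, D.blcan, ← k1, ← k2, ← k3, ← k4, D.lc (D.bar b), D.blc (D.bar b), D.lc g,
      D.blc g]
  rw [e]
  simp only [mul_neg, stdBasisMatrix_neg', sub_neg_eq_add]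
  simp [mul_add, add_mul, mul_sub, sub_mul, neg_eq_neg, neg_eq, h1, h2,
    h1', h2', Idx.neg_ne, ne_neg, sms, Idx.neg_neg, e3]
  simp only [mul_assoc]
  abel

/-- commuting short-short -/
theorem R3 (D : FormRingData A) {i j k l : Idx n} (h1 : i ≠ j) (h2 : k ≠ l)
    (h3 : j ≠ k) (h4 : i ≠ l) (h5 : j ≠ Idx.neg l) (h6 : i ≠ Idx.neg k) (a b : A) :
    ⁅D.TS i j a, D.TS k l b⁆ = 1 := by
  apply comm_of_eq
  apply Units.ext
  simp only [Units.val_mul]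
  rw [D.TS_val h1, D.TS_val h2]
  have h3' := h3.symm
  have h4' := h4.symm
  have h5' : l ≠ Idx.neg j := fun h => h5 (by rw [h, Idx.neg_neg])
  have h6' : k ≠ Idx.neg i := fun h => h6 (by rw [h, Idx.neg_neg])
  simp [mul_add, add_mul, mul_sub, sub_mul, neg_eq_neg, neg_eq, 
    h3', h4', h5', h6', h3, h4, h5, h6, Idx.neg_ne, ne_neg, sms, Idx.neg_neg]
  abel

/-- commuting long-short -/
theorem R3' (D : FormRingData A) {i k l : Idx n} (h2 : k ≠ l)
    (h3 : i ≠ Idx.neg k) (h4 : i ≠ l) (a b : A) :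
    ⁅D.TL i a, D.TS k l b⁆ = 1 := by
  apply comm_of_eq
  apply Units.ext
  simp only [Units.val_mul]
  rw [D.TL_val, D.TS_val h2]
  have h4' := h4.symm
  have h6' : k ≠ Idx.neg i := fun h => h3 (by rw [h, Idx.neg_neg])
  simp [mul_add, add_mul, mul_sub, sub_mul, neg_eq_neg, neg_eq, 
    h4', h6', h3, h4, Idx.neg_ne, ne_neg, sms, Idx.neg_neg]
  abel

/-- commuting long-long -/
theorem R7 (D : FormRingData A) {i k : Idx n} (h3 : i ≠ Idx.neg k) (a b : A) :
    ⁅D.TL i a, D.TL k b⁆ = 1 := by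
  apply comm_of_eq
  apply Units.ext
  simp only [Units.val_mul]
  rw [D.TL_val, D.TL_val]
  have h6' : k ≠ Idx.neg i := fun h => h3 (by rw [h, Idx.neg_neg])
  simp [mul_add, add_mul, mul_sub, sub_mul, neg_eq_neg, neg_eq, 
    h6', h3, Idx.neg_ne, ne_neg, sms, Idx.neg_neg]
  abel

end FormRingData

set_option linter.unusedSimpArgs false
set_option linter.unusedVariables false

namespace FormRingData

variable {A : Type*} [Ring A] {n : ℕ} {D : FormRingData A}

/-- Root elements of level `K` at position `(i,j)`. -/
def Rt (K : FormIdeal D) (i j : Idx n) (x : GLn A n) : Prop :=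
  (i ≠ j ∧ i ≠ Idx.neg j ∧ ∃ c ∈ K.I, x = D.TS i j c) ∨
    (j = Idx.neg i ∧ ∃ g ∈ K.Gamma, x = D.TL i (D.s i * g))

theorem Rt.ne {K : FormIdeal D} {i j : Idx n} {x : GLn A n} (h : Rt K i j x) : i ≠ j := by
  rcases h with ⟨h, -⟩ | ⟨h, -⟩
  · exact h
  · rw [h]; exact ne_neg i

theorem TS_zero {i j : Idx n} (h : i ≠ j) : D.TS i j 0 = 1 := by
  have := D.TS_add h 0 0
  rw [add_zero] at this
  exact left_eq_mul.mp this

theorem TL_zero (i : Idx n) : D.TL i 0 = 1 := by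
  have := D.TL_add i 0 0
  rw [add_zero] at this
  exact left_eq_mul.mp this

theorem TS_neg {i j : Idx n} (h : i ≠ j) (c : A) : D.TS i j (-c) = (D.TS i j c)⁻¹ := by
  rw [eq_inv_iff_mul_eq_one, ← D.TS_add h, neg_add_cancel, TS_zero h]

theorem TL_neg (i : Idx n) (c : A) : D.TL i (-c) = (D.TL i c)⁻¹ := by
  rw [eq_inv_iff_mul_eq_one, ← D.TL_add, neg_add_cancel, TL_zero]

theorem Rt.mul {K : FormIdeal D} {i j : Idx n} {x y : GLn A n} (h : Rt K i j x) (h' : Rt K i j y) :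
    Rt K i j (x * y) := by
  rcases h with ⟨h1, h2, c, hc, rfl⟩ | ⟨h1, g, hg, rfl⟩
  · rcases h' with ⟨-, -, d, hd, rfl⟩ | ⟨h3, -⟩
    · exact Or.inl ⟨h1, h2, c + d, K.I.add_mem hc hd, (D.TS_add h1 _ _).symm⟩
    · exact absurd (by rw [h3, Idx.neg_neg]) h2
  · rcases h' with ⟨-, h2, -⟩ | ⟨h3, d, hd, rfl⟩
    · exact absurd (by rw [h1, Idx.neg_neg]) h2
    · exact Or.inr ⟨h1, g + d, K.Gamma.add_mem hg hd, by rw [mul_add, TL_add]⟩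

theorem Rt.inv {K : FormIdeal D} {i j : Idx n} {x : GLn A n} (h : Rt K i j x) :
    Rt K i j x⁻¹ := by
  rcases h with ⟨h1, h2, c, hc, rfl⟩ | ⟨h1, g, hg, rfl⟩
  · exact Or.inl ⟨h1, h2, -c, K.I.neg_mem hc, (TS_neg h1 _).symm⟩
  · exact Or.inr ⟨h1, -g, K.Gamma.neg_mem hg, by rw [mul_neg, TL_neg]⟩

theorem Rt.flip {K : FormIdeal D} {i j : Idx n} {x : GLn A n} (h : Rt K i j x) :
    Rt K (Idx.neg j) (Idx.neg i) x := by
  rcases h with ⟨h1, h2, c, hc, rfl⟩ | ⟨h1, g, hg, rfl⟩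
  · refine Or.inl ⟨by rw [Ne, neg_eq_neg]; exact h1.symm, ?_, _, ?_, (D.TS_flip h1 c).symm⟩
    · rw [Idx.neg_neg]; exact h2.symm
    · exact K.I.neg_mem (K.mul_mem_left _ _ (K.bar_mem _ hc))
  · subst h1
    rw [Idx.neg_neg]
    exact Or.inr ⟨rfl, g, hg, rfl⟩

theorem Rt.one {K : FormIdeal D} {i j : Idx n} (h : i ≠ j) : Rt K i j 1 := by
  by_cases h2 : j = Idx.neg i
  · exact Or.inr ⟨h2, 0, K.Gamma.zero_mem, by rw [mul_zero, TL_zero]⟩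
  · exact Or.inl ⟨h, fun h' => h2 (by rw [h', Idx.neg_neg]), 0, K.I.zero_mem, (TS_zero h).symm⟩

/-- The unit form ideal. -/
def top (D : FormRingData A) : FormIdeal D where
  I := ⊤
  Gamma := D.Lambda
  mul_mem_left _ _ _ := trivial
  mul_mem_right _ _ _ := trivial
  bar_mem _ _ := trivial
  gammaMin_le := by
    unfold gammaMin
    rw [AddSubgroup.closure_le]
    rintro x (⟨a, -, rfl⟩ | ⟨a, -, c, hc, rfl⟩)
    · exact D.lambdaMin_mem a
    · exact D.lambda_conj a c hc
  gamma_le_I := le_top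
  gamma_le_Lambda := le_rfl
  gamma_conj c x hx := D.lambda_conj c x hx

/-- `K ∘ L ≤ M`. -/
structure Prodle (K L M : FormIdeal D) : Prop where
  ml : ∀ a ∈ K.I, ∀ b ∈ L.I, a * b ∈ M.I
  mr : ∀ a ∈ K.I, ∀ b ∈ L.I, b * a ∈ M.I
  gl : ∀ g ∈ K.Gamma, ∀ b ∈ L.I, D.bar b * g * b ∈ M.Gamma
  gr : ∀ g ∈ L.Gamma, ∀ a ∈ K.I, D.bar a * g * a ∈ M.Gamma

theorem Prodle.symm {K L M : FormIdeal D} (h : Prodle K L M) : Prodle L K M :=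
  ⟨fun a ha b hb => h.mr b hb a ha, fun a ha b hb => h.ml b hb a ha, h.gr, h.gl⟩

theorem prodle_top (K : FormIdeal D) : Prodle (top D) K K where
  ml a _ b hb := K.mul_mem_left a b hb
  mr a _ b hb := K.mul_mem_right a b hb
  gl g hg b hb := by
    refine K.gammaMin_le (AddSubgroup.subset_closure (Or.inr ⟨D.bar b, K.bar_mem b hb, g, hg, ?_⟩))
    rw [D.bar_bar]
  gr g hg a _ := by
    have := K.gamma_conj (D.bar a) g hg
    rwa [D.bar_bar] at this

theorem Rt.top {K : FormIdeal D} {i j : Idx n} {x : GLn A n} (h : Rt K i j x) :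
    Rt (top D) i j x := by
  rcases h with ⟨h1, h2, c, hc, rfl⟩ | ⟨h1, g, hg, rfl⟩
  · exact Or.inl ⟨h1, h2, c, trivial, rfl⟩
  · exact Or.inr ⟨h1, g, K.gamma_le_Lambda hg, rfl⟩

/-- Unipotent radical defined by a functional. -/
def U (K : FormIdeal D) (F : Idx n → ℤ) : Subgroup (GLn A n) :=
  Subgroup.closure {x | ∃ i j, F j < F i ∧ Rt K i j x}

theorem Rt.memU {K : FormIdeal D} {i j : Idx n} {x : GLn A n} (h : Rt K i j x) {F : Idx n → ℤ}
    (hF : F j < F i) : x ∈ U K F := Subgroup.subset_closure ⟨i, j, hF, h⟩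

/-- Odd functionals. -/
def Odd' (F : Idx n → ℤ) : Prop := ∀ i, F (Idx.neg i) = - F i

theorem comm_symm_mem {G : Type*} [Group G] {H : Subgroup G} {x y : G} (h : ⁅y, x⁆ ∈ H) :
    ⁅x, y⁆ ∈ H := by
  rw [← commutatorElement_inv]; exact H.inv_mem h

/-- exact chained commutator -/
theorem chain_short {K L M : FormIdeal D} (hM : Prodle K L M) {i j l : Idx n} {x y : GLn A n}
    (hx : Rt K i j x) (hy : Rt L j l y) (h1 : i ≠ Idx.neg j) (h2 : j ≠ Idx.neg l) (h : i ≠ l) :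
    Rt M i l ⁅x, y⁆ := by
  rcases hx with ⟨a1, a2, c, hc, rfl⟩ | ⟨h', -⟩
  swap
  · exact absurd (by rw [h', Idx.neg_neg]) h1
  rcases hy with ⟨b1, b2, d, hd, rfl⟩ | ⟨h', -⟩
  swap
  · exact absurd (by rw [h', Idx.neg_neg]) h2
  by_cases hl : l = Idx.neg i
  · subst hl
    refine Or.inr ⟨rfl, _, ?_, D.R5 a1 h1 c d⟩
    exact M.gammaMin_le (AddSubgroup.subset_closure (Or.inl
      ⟨_, M.mul_mem_left _ _ (hM.ml c hc d hd), rfl⟩))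
  · have h6 : i ≠ Idx.neg l := fun h => hl (by rw [h, Idx.neg_neg])
    exact Or.inl ⟨h, h6, _, hM.ml c hc d hd, D.R4 a1 h1 b1 b2 h h6 c d⟩

theorem chain_long {K L M : FormIdeal D} (hM : Prodle K L M) {i l : Idx n} {x y : GLn A n}
    (hx : Rt K i (Idx.neg i) x) (hy : Rt L (Idx.neg i) l y) (h1 : i ≠ l) (h2 : i ≠ Idx.neg l) :
    ∃ p q, Rt M i l p ∧ Rt M (Idx.neg l) l q ∧ ⁅x, y⁆ = p * q := by
  rcases hx with ⟨_, h', _⟩ | ⟨-, g, hg, rfl⟩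
  · exact absurd (Idx.neg_neg i).symm h'
  rcases hy with ⟨b1, b2, d, hd, rfl⟩ | ⟨h', -⟩
  swap
  · exact absurd (by rw [h', Idx.neg_neg]) h1
  refine ⟨_, _, Or.inl ⟨h1, h2, _, ?_, rfl⟩, Or.inr ⟨(Idx.neg_neg l).symm, _, ?_, rfl⟩,
    D.R6 h1 h2 g d (D.lambdaMax_mem g (K.gamma_le_Lambda hg))⟩
  · rw [mul_assoc]; exact M.mul_mem_left _ _ (hM.ml g (K.gamma_le_I hg) d hd)
  · exact M.Gamma.neg_mem (hM.gl g hg d hd)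

theorem CF_chain {K L M : FormIdeal D} (hM : Prodle K L M) {F : Idx n → ℤ} (hF : Odd' F)
    {i j l : Idx n} {x y : GLn A n} (hx : Rt K i j x) (hy : Rt L j l y)
    (h1 : i ≠ Idx.neg j) (h2 : j ≠ Idx.neg l)
    (f1 : F j ≤ F i) (f2 : F l ≤ F j) (f3 : F l < F i) : ⁅x, y⁆ ∈ U M F :=
  (chain_short hM hx hy h1 h2 (by rintro rfl; exact lt_irrefl _ f3)).memU f3

theorem CF_long {K L M : FormIdeal D} (hM : Prodle K L M) {F : Idx n → ℤ} (hF : Odd' F)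
    {i l : Idx n} {x y : GLn A n} (hx : Rt K i (Idx.neg i) x) (hy : Rt L (Idx.neg i) l y)
    (h2 : i ≠ Idx.neg l)
    (f1 : F (Idx.neg i) ≤ F i) (f2 : F l ≤ F (Idx.neg i)) (f3 : F l < F i) : ⁅x, y⁆ ∈ U M F := by
  obtain ⟨p, q, hp, hq, e⟩ := chain_long hM hx hy (by rintro rfl; exact lt_irrefl _ f3) h2
  rw [e]
  refine (U M F).mul_mem (hp.memU f3) (hq.memU ?_)
  rw [hF] at *; linarith

theorem CF {K L M : FormIdeal D} (hM : Prodle K L M) {F : Idx n → ℤ} (hF : Odd' F)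
    {i j k l : Idx n} {x y : GLn A n} (hx : Rt K i j x) (hy : Rt L k l y)
    (f1 : F j ≤ F i) (f2 : F l ≤ F k) (f3 : F j + F l < F i + F k) : ⁅x, y⁆ ∈ U M F := by
  by_cases hs : i = Idx.neg j
  · have hj : j = Idx.neg i := by rw [hs, Idx.neg_neg]
    subst hj
    by_cases ht : k = Idx.neg l
    · have hj : l = Idx.neg k := by rw [ht, Idx.neg_neg]
      subst hj
      rcases hx with ⟨_, h', _⟩ | ⟨-, g, hg, rfl⟩
      · exact absurd (Idx.neg_neg i).symm h'
      rcases hy with ⟨_, h', _⟩ | ⟨-, g, hg, rfl⟩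
      · exact absurd (Idx.neg_neg k).symm h'
      rw [D.R7]
      · exact one_mem _
      · rintro rfl
        simp only [hF _] at *; linarith
    · by_cases h : k = Idx.neg i
      · subst h
        exact CF_long hM hF hx hy (fun e => hy.ne (by rw [e, Idx.neg_neg])) f1 f2 (by linarith)
      by_cases h' : l = i
      · subst h'
        exact CF_long hM hF hx hy.flip (by rw [Idx.neg_neg]; exact Ne.symm hy.ne) f1
          (by rw [hF, hF]; linarith) (by linarith [hF k, hF l])
      rcases hx with ⟨_, h', _⟩ | ⟨-, g, hg, rfl⟩
      · exact absurd (Idx.neg_neg i).symm h'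
      rcases hy with ⟨b1, b2, d, hd, rfl⟩ | ⟨h'', -⟩
      swap
      · exact absurd (by rw [h'', Idx.neg_neg]) ht
      rw [D.R3' b1 (fun e => h (by rw [e, Idx.neg_neg])) (Ne.symm h')]
      exact one_mem _
  · by_cases ht : k = Idx.neg l
    · have hj : l = Idx.neg k := by rw [ht, Idx.neg_neg]
      subst hj
      apply comm_symm_mem
      by_cases h : i = Idx.neg k
      · subst h
        exact CF_long hM.symm hF hy hx (fun e => hx.ne (by rw [e, Idx.neg_neg])) f2 f1 (by linarith)
      by_cases h' : j = k
      · subst h'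
        exact CF_long hM.symm hF hy hx.flip (by rw [Idx.neg_neg]; exact Ne.symm hx.ne) f2
          (by rw [hF, hF]; linarith) (by linarith [hF i, hF j])
      rcases hy with ⟨_, h', _⟩ | ⟨-, g, hg, rfl⟩
      · exact absurd (Idx.neg_neg k).symm h'
      rcases hx with ⟨b1, b2, d, hd, rfl⟩ | ⟨h'', -⟩
      swap
      · exact absurd (by rw [h'', Idx.neg_neg]) hs
      rw [D.R3' b1 (fun e => h (by rw [e, Idx.neg_neg])) (Ne.symm h')]
      exact one_mem _
    · by_cases h1 : j = k
      · subst h1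
        exact CF_chain hM hF hx hy hs ht f1 f2 (by linarith)
      by_cases h2 : i = l
      · subst h2
        exact comm_symm_mem (CF_chain hM.symm hF hy hx ht hs f2 f1 (by linarith))
      by_cases h3 : j = Idx.neg l
      · subst h3
        exact CF_chain hM hF hx hy.flip hs (by rw [Ne, neg_eq_neg, neg_eq] at *; tauto)
          f1 (by linarith [hF k, hF l]) (by linarith [hF k, hF l])
      by_cases h4 : i = Idx.neg k
      · subst h4
        refine comm_symm_mem (CF_chain hM.symm hF hy.flip hx
          (fun e => ht (by rw [e, Idx.neg_neg])) (by rw [Ne, neg_eq_neg] at *; tauto)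
          (by linarith [hF k, hF l])
          f1 (by linarith [hF k, hF l, hF j]))
      rcases hx with ⟨a1, a2, c, hc, rfl⟩ | ⟨h', -⟩
      swap
      · exact absurd (by rw [h', Idx.neg_neg]) hs
      rcases hy with ⟨b1, b2, d, hd, rfl⟩ | ⟨h', -⟩
      swap
      · exact absurd (by rw [h', Idx.neg_neg]) ht
      rw [D.R3 a1 b1 h1 h2 h3 h4]
      exact one_mem _

/-- indicator functional -/
def ind (m : Idx n) : Idx n → ℤ :=
  fun x => (if x = m then 1 else 0) - (if x = Idx.neg m then 1 else 0)

theorem ind_odd (m : Idx n) : Odd' (ind m) := by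
  intro i
  simp only [ind, neg_eq_neg, neg_eq, Idx.neg_neg]
  ring

/-- `(k,l)` is not proportional to `(i,j)` -/
def NP (i j k l : Idx n) : Prop :=
  ¬ (k = i ∧ l = j) ∧ ¬ (k = Idx.neg j ∧ l = Idx.neg i) ∧
  ¬ (k = j ∧ l = i) ∧ ¬ (k = Idx.neg i ∧ l = Idx.neg j)

theorem exF {i j k l : Idx n} (hij : i ≠ j) (hkl : k ≠ l) (h : NP i j k l) :
    ∃ F : Idx n → ℤ, Odd' F ∧ F i = F j ∧ F l < F k := by
  obtain ⟨h1, h2, h3, h4⟩ := h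
  have ni := Idx.neg_neg i
  have nj := Idx.neg_neg j
  have nk := Idx.neg_neg k
  have nl := Idx.neg_neg l
  have mi := Idx.neg_ne i
  have mj := Idx.neg_ne j
  have mk := Idx.neg_ne k
  have ml := Idx.neg_ne l
  by_cases a : k = i ∨ k = j ∨ k = Idx.neg i ∨ k = Idx.neg j
  · by_cases b : l = i ∨ l = j ∨ l = Idx.neg i ∨ l = Idx.neg j
    · by_cases c : k = i ∨ k = j
      · refine ⟨fun x => ind i x + ind j x, fun x => by simp only [ind_odd _ x]; ring, ?_, ?_⟩ <;>
          simp only [ind] <;> grind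
      · refine ⟨fun x => -(ind i x + ind j x), fun x => by simp only [ind_odd _ x]; ring, ?_, ?_⟩ <;>
          simp only [ind] <;> grind
    · refine ⟨fun x => - ind l x, fun x => by simp only [ind_odd l x], ?_, ?_⟩ <;>
        simp only [ind] <;> grind
  · refine ⟨ind k, ind_odd k, ?_, ?_⟩ <;> simp only [ind] <;> grind

theorem exF' {i j k l : Idx n} (hij : i ≠ j) (hkl : k ≠ l)
    (h3 : ¬ (k = j ∧ l = i)) (h4 : ¬ (k = Idx.neg i ∧ l = Idx.neg j)) :
    ∃ F : Idx n → ℤ, Odd' F ∧ F j ≤ F i ∧ F l ≤ F k ∧ F j + F l < F i + F k := by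
  by_cases h : NP i j k l
  · obtain ⟨F, hF, h1, h2⟩ := exF hij hkl h
    exact ⟨F, hF, h1.ge, h2.le, by linarith⟩
  · have hlt : ind i j < ind i i := by
      have := Idx.neg_ne i
      simp only [ind]; grind
    have : (k = i ∧ l = j) ∨ (k = Idx.neg j ∧ l = Idx.neg i) := by unfold NP at h; tauto
    rcases this with ⟨rfl, rfl⟩ | ⟨rfl, rfl⟩
    · exact ⟨_, ind_odd k, hlt.le, hlt.le, by linarith⟩
    · exact ⟨_, ind_odd i, hlt.le, by simp only [ind_odd i _]; linarith,
        by simp only [ind_odd i _]; linarith⟩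

end FormRingData

set_option linter.unusedSimpArgs false
set_option linter.unusedVariables false

namespace FormRingData

section grp
variable {G : Type*} [Group G]

/-- `H` normalizes `N` -/
def Nrm (H N : Subgroup G) : Prop := ∀ g ∈ H, ∀ x ∈ N, g * x * g⁻¹ ∈ N

theorem Nrm.mono {H H' N : Subgroup G} (h : Nrm H N) (h' : H' ≤ H) : Nrm H' N :=
  fun g hg => h g (h' hg)

theorem conj_closure {T : Set G} {N : Subgroup G} {g : G}
    (h : ∀ t ∈ T, g * t * g⁻¹ ∈ N) {x : G} (hx : x ∈ Subgroup.closure T) : g * x * g⁻¹ ∈ N := by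
  have : Subgroup.closure T ≤ N.comap (MulAut.conj g).toMonoidHom := by
    rw [Subgroup.closure_le]
    intro t ht
    exact h t ht
  exact this hx

theorem nrm_closure {S : Set G} {N : Subgroup G} (hinv : ∀ s ∈ S, s⁻¹ ∈ S)
    (h : ∀ s ∈ S, ∀ x ∈ N, s * x * s⁻¹ ∈ N) : Nrm (Subgroup.closure S) N := by
  intro g hg
  have : ∀ x ∈ N, g * x * g⁻¹ ∈ N ∧ g⁻¹ * x * g ∈ N := by
    induction hg using Subgroup.closure_induction with
    | mem s hs =>
      intro x hx
      refine ⟨h s hs x hx, ?_⟩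
      have := h _ (hinv s hs) x hx
      rwa [inv_inv] at this
    | one => intro x hx; simpa using hx
    | mul a b _ _ ha hb =>
      intro x hx
      constructor
      · have := (ha _ (hb x hx).1).1
        convert this using 1; group
      · have := (hb _ (ha x hx).2).2
        convert this using 1; group
    | inv a _ ha =>
      intro x hx
      rw [inv_inv]
      exact (ha x hx).symm
  exact fun x hx => (this x hx).1

theorem nrm_closure2 {S T : Set G} (hinv : ∀ s ∈ S, s⁻¹ ∈ S)
    (h : ∀ s ∈ S, ∀ x ∈ T, s * x * s⁻¹ ∈ Subgroup.closure T) :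
    Nrm (Subgroup.closure S) (Subgroup.closure T) :=
  nrm_closure hinv fun s hs x hx => conj_closure (h s hs) hx

theorem Nrm.inv_conj {H N : Subgroup G} (h : Nrm H N) {g x : G} (hg : g ∈ H) (hx : x ∈ N) :
    g⁻¹ * x * g ∈ N := by
  have := h g⁻¹ (H.inv_mem hg) x hx
  rwa [inv_inv] at this

/-- elements of `E` commuting with `c` modulo `N` -/
def cen {E N : Subgroup G} (h : Nrm E N) (c : G) : Subgroup G where
  carrier := {g | g ∈ E ∧ ⁅g, c⁆ ∈ N}
  one_mem' := ⟨E.one_mem, by rw [commutatorElement_one_left]; exact N.one_mem⟩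
  mul_mem' := by
    rintro a b ⟨ha, ha'⟩ ⟨hb, hb'⟩
    refine ⟨E.mul_mem ha hb, ?_⟩
    have : ⁅a * b, c⁆ = (a * ⁅b, c⁆ * a⁻¹) * ⁅a, c⁆ := by
      simp only [commutatorElement_def]; group
    rw [this]
    exact N.mul_mem (h a ha _ hb') ha'
  inv_mem' := by
    rintro a ⟨ha, ha'⟩
    refine ⟨E.inv_mem ha, ?_⟩
    have : ⁅a⁻¹, c⁆ = a⁻¹ * ⁅a, c⁆⁻¹ * a := by
      simp only [commutatorElement_def]; group
    rw [this]
    exact h.inv_conj ha (N.inv_mem ha')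

theorem comm_ind {S : Set G} {N : Subgroup G} (h : Nrm (Subgroup.closure S) N) {c : G}
    (hS : ∀ s ∈ S, ⁅s, c⁆ ∈ N) {u : G} (hu : u ∈ Subgroup.closure S) : ⁅u, c⁆ ∈ N := by
  have : Subgroup.closure S ≤ cen h c := by
    rw [Subgroup.closure_le]
    exact fun s hs => ⟨Subgroup.subset_closure hs, hS s hs⟩
  exact (this hu).2

theorem conj_eq (g x : G) : g * x * g⁻¹ = ⁅g, x⁆ * x := by
  simp only [commutatorElement_def]; group

theorem key_comm {E N : Subgroup G} (h : Nrm E N) {x y g : G} (hx : x ∈ E) (hy : y ∈ E)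
    (h1 : ⁅x, ⁅y, g⁆⁆ ∈ N) (h2 : ⁅y, ⁅x, g⁆⁆ ∈ N) (h3 : ⁅⁅x, g⁆, ⁅y, g⁆⁆ ∈ N) :
    ⁅⁅x⁻¹, y⁻¹⁆, g⁆ ∈ N := by
  have hm : ⁅x, ⁅y, g⁆⁆ * (⁅y, ⁅x, g⁆⁆ * ⁅⁅x, g⁆, ⁅y, g⁆⁆)⁻¹ ∈ N :=
    N.mul_mem h1 (N.inv_mem (N.mul_mem h2 h3))
  have := h.inv_conj (E.mul_mem hy hx) hm
  convert this using 1
  simp only [commutatorElement_def]; group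

end grp

variable {A : Type*} [Ring A] {n : ℕ} {D : FormRingData A}

/-- group generated by all root elements of level `K` -/
def Fr (n : ℕ) (K : FormIdeal D) : Subgroup (GLn A n) :=
  Subgroup.closure {x | ∃ i j, Rt K i j x}

theorem transvGen_eq (K : FormIdeal D) :
    D.transvGen n K.I K.Gamma = {x | ∃ i j, Rt K i j x} := by
  ext x
  constructor
  · rintro (⟨i, j, h⟩ | ⟨i, g, hg, rfl⟩)
    · exact ⟨i, j, Or.inl h⟩
    · exact ⟨i, Idx.neg i, Or.inr ⟨rfl, g, hg, by rw [lpow_long]⟩⟩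
  · rintro ⟨i, j, h | ⟨rfl, g, hg, rfl⟩⟩
    · exact Or.inl ⟨i, j, h⟩
    · exact Or.inr ⟨i, g, hg, by rw [lpow_long]⟩

theorem FU_eq (K : FormIdeal D) : D.FU n K.I K.Gamma = Fr n K := by
  unfold FU Fr; rw [transvGen_eq]

theorem EUmax_eq : D.EUmax n = Fr n (top D) := FU_eq (top D)

theorem Rt.memF {K : FormIdeal D} {i j : Idx n} {x : GLn A n} (h : Rt K i j x) : x ∈ Fr n K :=
  Subgroup.subset_closure ⟨i, j, h⟩

theorem Rt.memE {K : FormIdeal D} {i j : Idx n} {x : GLn A n} (h : Rt K i j x) :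
    x ∈ Fr n (D.top) := h.top.memF

theorem Fr_le (K : FormIdeal D) : Fr n K ≤ Fr n (D.top) := by
  unfold Fr
  rw [Subgroup.closure_le]
  rintro x ⟨i, j, h⟩
  exact h.memE

/-- parabolic -/
def B (D : FormRingData A) (F : Idx n → ℤ) : Subgroup (GLn A n) :=
  Subgroup.closure {x | ∃ i j, F j ≤ F i ∧ Rt (top D) i j x}

theorem Rt.memB {K : FormIdeal D} {i j : Idx n} {x : GLn A n} (h : Rt K i j x) {F : Idx n → ℤ}
    (hF : F j ≤ F i) : x ∈ B D F := Subgroup.subset_closure ⟨i, j, hF, h.top⟩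

theorem U_le_B (K : FormIdeal D) (F : Idx n → ℤ) : U K F ≤ B D F := by
  unfold U
  rw [Subgroup.closure_le]
  rintro x ⟨i, j, hF, h⟩
  exact h.memB hF.le

theorem U_le_F (K : FormIdeal D) (F : Idx n → ℤ) : U K F ≤ Fr n K := by
  unfold U
  rw [Subgroup.closure_le]
  rintro x ⟨i, j, hF, h⟩
  exact h.memF

theorem nrm_U (K : FormIdeal D) {F : Idx n → ℤ} (hF : Odd' F) : Nrm (B D F) (U K F) := by
  refine nrm_closure2 ?_ ?_
  · rintro s ⟨i, j, h, hs⟩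
    exact ⟨i, j, h, hs.inv⟩
  · rintro s ⟨i, j, h, hs⟩ x ⟨k, l, h', hx⟩
    rw [conj_eq]
    exact (U K F).mul_mem (CF (prodle_top K) hF hs hx h h'.le (by linarith)) (hx.memU h')

theorem L5 {K L M : FormIdeal D} (hM : Prodle K L M) {F : Idx n → ℤ} (hF : Odd' F)
    {u y : GLn A n} {k l : Idx n} (hu : u ∈ U K F) (hy : Rt L k l y) (h : F l ≤ F k) :
    ⁅u, y⁆ ∈ U M F := by
  refine comm_ind ((nrm_U M hF).mono (U_le_B K F)) ?_ hu
  rintro s ⟨i, j, h', hs⟩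
  exact CF hM hF hs hy h'.le h (by linarith)

theorem L5' {K L M : FormIdeal D} (hM : Prodle K L M) {F : Idx n → ℤ} (hF : Odd' F)
    {u y : GLn A n} (hu : u ∈ U K F) (hy : y ∈ U L F) :
    ⁅u, y⁆ ∈ U M F := by
  apply comm_symm_mem
  refine comm_ind ((nrm_U M hF).mono (U_le_B L F)) ?_ hy
  rintro s ⟨i, j, h', hs⟩
  exact comm_symm_mem (L5 hM hF hu hs h'.le)

theorem comm_nonopp {K L M : FormIdeal D} (hM : Prodle K L M) {i j k l : Idx n} {x y : GLn A n}
    (hx : Rt K i j x) (hy : Rt L k l y) (h3 : ¬ (k = j ∧ l = i))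
    (h4 : ¬ (k = Idx.neg i ∧ l = Idx.neg j)) : ⁅x, y⁆ ∈ Fr n M := by
  obtain ⟨F, hF, a, b, c⟩ := exF' hx.ne hy.ne h3 h4
  exact U_le_F M F (CF hM hF hx hy a b c)

theorem conj_nonopp {K : FormIdeal D} {i j k l : Idx n} {x y : GLn A n}
    (hx : Rt (top D) i j x) (hy : Rt K k l y) (h3 : ¬ (k = j ∧ l = i))
    (h4 : ¬ (k = Idx.neg i ∧ l = Idx.neg j)) : x * y * x⁻¹ ∈ Fr n K := by
  rw [conj_eq]
  exact (Fr n K).mul_mem (comm_nonopp (prodle_top K) hx hy h3 h4) hy.memF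

theorem L6 {K : FormIdeal D} {i j k l : Idx n} {x w g : GLn A n}
    (hx : Rt K i j x) (hw : Rt (top D) j i w) (hg : Rt (top D) k l g) (h : NP i j k l) :
    ⁅g, w * x * w⁻¹⁆ ∈ Fr n K := by
  obtain ⟨F, hF, e, lt⟩ := exF hx.ne hg.ne h
  have hwB : w ∈ B D F := hw.memB e.le
  have h1 : w⁻¹ * g * w ∈ U (top D) F := (nrm_U _ hF).inv_conj hwB (hg.memU lt)
  have h2 := L5 (prodle_top K) hF h1 hx e.ge
  have h3 := nrm_U K hF w hwB _ h2
  refine U_le_F K F ?_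
  convert h3 using 1
  simp only [commutatorElement_def]; group

/-- elementary conjugates -/
def Zt (K : FormIdeal D) (i j : Idx n) (z : GLn A n) : Prop :=
  ∃ x w, Rt K i j x ∧ Rt (top D) j i w ∧ z = w * x * w⁻¹

/-- group generated by elementary conjugates -/
def P (n : ℕ) (K : FormIdeal D) : Subgroup (GLn A n) :=
  Subgroup.closure {z | ∃ i j, Zt K i j z}

theorem Zt.memP {K : FormIdeal D} {i j : Idx n} {z : GLn A n} (h : Zt K i j z) : z ∈ P n K :=
  Subgroup.subset_closure ⟨i, j, h⟩

theorem Rt.zt {K : FormIdeal D} {i j : Idx n} {x : GLn A n} (h : Rt K i j x) : Zt K i j x :=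
  ⟨x, 1, h, Rt.one h.ne.symm, by simp⟩

theorem F_le_P (K : FormIdeal D) : Fr n K ≤ P n K := by
  unfold Fr
  rw [Subgroup.closure_le]
  rintro x ⟨i, j, h⟩
  exact h.zt.memP

theorem P_le_E (K : FormIdeal D) : P n K ≤ Fr n D.top := by
  unfold P
  rw [Subgroup.closure_le]
  rintro x ⟨i, j, x, w, hx, hw, rfl⟩
  exact mul_mem (mul_mem hw.memE hx.memE) (inv_mem hw.memE)

theorem factA {K : FormIdeal D} {k l : Idx n} {g f : GLn A n} (hg : Rt (top D) k l g)
    (hf : f ∈ Fr n K) : g * f * g⁻¹ ∈ P n K := by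
  refine conj_closure ?_ hf
  rintro x ⟨i, j, hx⟩
  by_cases h3 : i = l ∧ j = k
  · obtain ⟨rfl, rfl⟩ := h3
    exact Zt.memP ⟨x, g, hx, hg, rfl⟩
  by_cases h4 : i = Idx.neg k ∧ j = Idx.neg l
  · obtain ⟨rfl, rfl⟩ := h4
    exact Zt.memP ⟨x, g, hx, hg.flip, rfl⟩
  exact F_le_P K (conj_nonopp hg hx h3 h4)

theorem factB {K : FormIdeal D} {i j k l : Idx n} {z g : GLn A n}
    (hz : Zt K i j z) (hg : Rt (top D) k l g) (h : NP i j k l) :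
    ∃ f ∈ Fr n K, g * z * g⁻¹ = f * z := by
  obtain ⟨x, w, hx, hw, rfl⟩ := hz
  exact ⟨_, L6 hx hw hg h, conj_eq _ _⟩

theorem factB' {K : FormIdeal D} {i j k l : Idx n} {z g : GLn A n}
    (hz : Zt K i j z) (hg : Rt (top D) k l g) (h : NP i j k l) :
    g * z * g⁻¹ ∈ P n K := by
  obtain ⟨f, hf, e⟩ := factB hz hg h
  rw [e]; exact mul_mem (F_le_P K hf) hz.memP

theorem factC {K : FormIdeal D} {i j k l k' l' : Idx n} {z g g' : GLn A n}
    (hz : Zt K i j z) (hg : Rt (top D) k l g) (h : NP i j k l)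
    (hg' : Rt (top D) k' l' g') (h' : NP i j k' l') :
    (g' * g) * z * (g' * g)⁻¹ ∈ P n K := by
  obtain ⟨f, hf, e⟩ := factB hz hg h
  have : (g' * g) * z * (g' * g)⁻¹ = (g' * f * g'⁻¹) * (g' * z * g'⁻¹) := by
    rw [show (g' * g) * z * (g' * g)⁻¹ = g' * (g * z * g⁻¹) * g'⁻¹ by group, e]; group
  rw [this]
  exact mul_mem (factA hg' hf) (factB' hz hg' h')

end FormRingData

set_option linter.unusedSimpArgs false
set_option linter.unusedVariables false

namespace FormRingData

variable {A : Type*} [Ring A] {n : ℕ} {D : FormRingData A}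

theorem dn {i j : Idx n} (h : i.1 ≠ j.1) : i ≠ j := fun e => h (by rw [e])

theorem dn' {i j : Idx n} (h : i ≠ j) (h' : i ≠ Idx.neg j) : i.1 ≠ j.1 := by
  intro e
  rcases i with ⟨i, a⟩
  rcases j with ⟨j, b⟩
  cases a <;> cases b <;> simp_all [Idx.neg]

theorem np_l {i j k l : Idx n} (h : k.1 ≠ i.1) (h' : k.1 ≠ j.1) : NP i j k l :=
  ⟨fun e => h (by rw [e.1]), fun e => h' (by rw [e.1]; rfl), fun e => h' (by rw [e.1]),
    fun e => h (by rw [e.1]; rfl)⟩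

theorem np_r {i j k l : Idx n} (h : l.1 ≠ i.1) (h' : l.1 ≠ j.1) : NP i j k l :=
  ⟨fun e => h' (by rw [e.2]), fun e => h (by rw [e.2]; rfl), fun e => h (by rw [e.2]),
    fun e => h' (by rw [e.2]; rfl)⟩

theorem exk (hn : 3 ≤ n) (i j : Idx n) : ∃ k : Idx n, k.1 ≠ i.1 ∧ k.1 ≠ j.1 := by
  have : ∃ m : Fin n, m ∉ ({i.1, j.1} : Finset (Fin n)) := by
    by_contra hc
    push Not at hc
    have h1 : Finset.univ ⊆ ({i.1, j.1} : Finset (Fin n)) := fun x _ => hc x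
    have h2 := Finset.card_le_card h1
    have h3 := Finset.card_le_two (a := i.1) (b := j.1)
    rw [Finset.card_univ, Fintype.card_fin] at h2
    omega
  obtain ⟨m, hm⟩ := this
  simp only [Finset.mem_insert, Finset.mem_singleton, not_or] at hm
  exact ⟨(m, true), hm.1, hm.2⟩

theorem comm0 {K L : FormIdeal D} {i j k l : Idx n} {x y : GLn A n}
    (hx : Rt K i j x) (hy : Rt L k l y) (h1 : i.1 ≠ j.1) (h2 : k.1 ≠ l.1)
    (h3 : j ≠ k) (h4 : i ≠ l) (h5 : j ≠ Idx.neg l) (h6 : i ≠ Idx.neg k) : ⁅x, y⁆ = 1 := by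
  rcases hx with ⟨a1, a2, c, hc, rfl⟩ | ⟨rfl, -⟩
  swap
  · exact absurd rfl h1
  rcases hy with ⟨b1, b2, d, hd, rfl⟩ | ⟨rfl, -⟩
  swap
  · exact absurd rfl h2
  exact D.R3 a1 b1 h3 h4 h5 h6 _ _

theorem comm0' {K L : FormIdeal D} {i k l : Idx n} {x y : GLn A n}
    (hx : Rt K i (Idx.neg i) x) (hy : Rt L k l y) (h2 : k.1 ≠ l.1)
    (h3 : i ≠ Idx.neg k) (h4 : i ≠ l) : ⁅x, y⁆ = 1 := by
  rcases hx with ⟨_, h', _⟩ | ⟨-, g, hg, rfl⟩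
  · exact absurd (Idx.neg_neg i).symm h'
  rcases hy with ⟨b1, b2, d, hd, rfl⟩ | ⟨rfl, -⟩
  swap
  · exact absurd rfl h2
  exact D.R3' b1 h3 h4 _ _

theorem comm0'' {K L : FormIdeal D} {i k : Idx n} {x y : GLn A n}
    (hx : Rt K i (Idx.neg i) x) (hy : Rt L k (Idx.neg k) y) (h3 : i ≠ Idx.neg k) : ⁅x, y⁆ = 1 := by
  rcases hx with ⟨_, h', _⟩ | ⟨-, g, hg, rfl⟩
  · exact absurd (Idx.neg_neg i).symm h'
  rcases hy with ⟨_, h', _⟩ | ⟨-, g', hg, rfl⟩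
  · exact absurd (Idx.neg_neg k).symm h'
  exact D.R7 h3 _ _

theorem rt_short (K : FormIdeal D) {i j : Idx n} (h : i.1 ≠ j.1) {c : A} (hc : c ∈ K.I) :
    Rt K i j (D.TS i j c) := Or.inl ⟨dn h, dn h, c, hc, rfl⟩

theorem rt_long (K : FormIdeal D) (i : Idx n) {c : A} (hc : c ∈ K.Gamma) :
    Rt K i (Idx.neg i) (D.TL i (D.s i * c)) := Or.inr ⟨rfl, c, hc, rfl⟩

theorem dec_short {K : FormIdeal D} {i j k : Idx n} {x : GLn A n} (hx : Rt K i j x)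
    (h : i.1 ≠ j.1) (h1 : k.1 ≠ i.1) (h2 : k.1 ≠ j.1) :
    ∃ y t, Rt K i k y ∧ Rt (top D) k j t ∧ x = ⁅y, t⁆ := by
  rcases hx with ⟨a1, a2, c, hc, rfl⟩ | ⟨rfl, -⟩
  swap
  · exact absurd rfl h
  refine ⟨_, _, rt_short K h1.symm hc, rt_short (top D) h2 (c := 1) trivial, ?_⟩
  rw [D.R4 (dn h1.symm) (dn h1.symm) (dn h2) (dn h2) a1 a2, mul_one]

theorem dec_long {K : FormIdeal D} {i j : Idx n} {x : GLn A n} (hx : Rt K i (Idx.neg i) x)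
    (h : i.1 ≠ j.1) :
    ∃ p y t, Rt K j (Idx.neg i) p ∧ Rt K j (Idx.neg j) y ∧
      Rt (top D) (Idx.neg j) (Idx.neg i) t ∧ x = p * ⁅y, t⁆ := by
  rcases hx with ⟨_, h', _⟩ | ⟨-, g, hg, rfl⟩
  · exact absurd (Idx.neg_neg i).symm h'
  have hg' := K.Gamma.neg_mem hg
  refine ⟨_, _, _, (rt_short K (i := j) (j := Idx.neg i) h.symm
    (K.mul_mem_left (D.s j) _ (K.gamma_le_I hg'))).inv, rt_long K j hg',
    rt_short (top D) (i := Idx.neg j) (j := Idx.neg i) h.symm (c := 1) trivial, ?_⟩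
  rw [D.R6 (i := j) (l := Idx.neg i) (dn h.symm) (dn h.symm) _ _ (D.lambdaMax_mem _ (K.gamma_le_Lambda hg')), mul_one,
    inv_mul_cancel_left, Idx.neg_neg, D.bar_one, one_mul, mul_one, neg_neg]

theorem dec (hn : 3 ≤ n) {K : FormIdeal D} {i j : Idx n} {x : GLn A n} (hx : Rt K i j x) :
    ∃ p y t, (∃ k l, NP i j k l ∧ Rt K k l p) ∧ (∃ k l, NP i j k l ∧ Rt K k l y) ∧
      (∃ k l, NP i j k l ∧ Rt (top D) k l t) ∧ x = p * ⁅y, t⁆ := by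
  obtain ⟨k, h1, h2⟩ := exk hn i j
  by_cases h : j = Idx.neg i
  · subst h
    obtain ⟨p, y, t, hp, hy, ht, e⟩ := dec_long hx h1.symm
    exact ⟨p, y, t, ⟨_, _, np_l h1 h2, hp⟩, ⟨_, _, np_l h1 h2, hy⟩,
      ⟨Idx.neg k, _, np_l h1 h2, ht⟩, e⟩
  · have hij : i.1 ≠ j.1 := dn' hx.ne (fun e => h (by rw [e, Idx.neg_neg]))
    obtain ⟨y, t, hy, ht, e⟩ := dec_short hx hij h1 h2
    exact ⟨1, y, t, ⟨_, _, np_r h1 h2, Rt.one hy.ne⟩, ⟨_, _, np_r h1 h2, hy⟩,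
      ⟨_, _, np_l h1 h2, ht⟩, by rw [e, one_mul]⟩

theorem comm_eq_one {G : Type*} [Group G] {x y : G} (h : ⁅x, y⁆ = 1) : x * y = y * x :=
  commutatorElement_eq_one_iff_mul_comm.mp h

theorem shape {L : FormIdeal D} {i j k : Idx n} {x w g : GLn A n} (hx : Rt L i k x)
    (hij : i.1 ≠ j.1) (h1 : k.1 ≠ i.1) (h2 : k.1 ≠ j.1)
    (hw : Rt (top D) j i w) (hg : Rt (top D) i j g) :
    ∃ a b, Rt L i k a ∧ Rt L j k b ∧ (g * w) * x * (g * w)⁻¹ = a * b ∧ a * b = b * a := by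
  have e1 := chain_short (prodle_top L) hw hx (dn hij.symm) (dn h1.symm) (dn h2.symm)
  have e2 := chain_short (prodle_top L) hg e1 (dn hij) (dn h2.symm) (dn h1.symm)
  have c1 : g * x = x * g := comm_eq_one (comm0 hg hx hij h1.symm (dn hij.symm) (dn h1.symm)
    (dn h2.symm) (ne_neg i))
  refine ⟨⁅g, ⁅w, x⁆⁆ * x, ⁅w, x⁆, e2.mul hx, e1, ?_, ?_⟩
  · have c2 : ⁅w, x⁆ * x = x * ⁅w, x⁆ := comm_eq_one (comm0 e1 hx h2.symm h1.symm
      (dn h1) (dn h2.symm) (ne_neg k) (dn hij.symm))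
    calc (g * w) * x * (g * w)⁻¹ = g * (⁅w, x⁆ * x) * g⁻¹ := by
          rw [commutatorElement_def]; group
      _ = g * ⁅w, x⁆ * g⁻¹ * (g * x * g⁻¹) := by rw [c2, ← c2]; group
      _ = g * ⁅w, x⁆ * g⁻¹ * x := by rw [c1]; group
      _ = ⁅g, ⁅w, x⁆⁆ * (⁅w, x⁆ * x) := by rw [conj_eq, mul_assoc]
      _ = _ := by rw [c2, mul_assoc]
  · exact comm_eq_one (comm0 (e2.mul hx) e1 h1.symm h2.symm (dn h2) (dn h1.symm)
      (ne_neg k) (dn hij))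

theorem nrmP_short {K : FormIdeal D} {i j k : Idx n} {x w g : GLn A n} (hx : Rt K i j x)
    (hij : i.1 ≠ j.1) (h1 : k.1 ≠ i.1) (h2 : k.1 ≠ j.1)
    (hw : Rt (top D) j i w) (hg : Rt (top D) i j g) :
    g * (w * x * w⁻¹) * g⁻¹ ∈ P n K := by
  obtain ⟨y, t, hy, ht, rfl⟩ := dec_short hx hij h1 h2
  obtain ⟨a, b, ha, hb, e1, e2⟩ := shape hy hij h1 h2 hw hg
  obtain ⟨b', a', hb', ha', e3, e4⟩ := shape (L := top D) (i := Idx.neg j) (j := Idx.neg i)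
    (k := Idx.neg k) ht.flip hij.symm h2 h1 hw.flip hg.flip
  replace ha' := ha'.flip
  replace hb' := hb'.flip
  rw [Idx.neg_neg, Idx.neg_neg] at ha' hb'
  have e : g * (w * ⁅y, t⁆ * w⁻¹) * g⁻¹ = ⁅(g * w) * y * (g * w)⁻¹, (g * w) * t * (g * w)⁻¹⁆ := by
    simp only [commutatorElement_def]; group
  have ee : ⁅a * b, b' * a'⁆ =
      a * b * ((a' * (b' * b⁻¹ * b'⁻¹) * a'⁻¹) * (b' * (a' * a⁻¹ * a'⁻¹) * b'⁻¹)) := by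
    have : ⁅a * b, b' * a'⁆ = a * b * (((b' * a') * b⁻¹ * (b' * a')⁻¹) *
        ((b' * a') * a⁻¹ * (b' * a')⁻¹)) := by simp only [commutatorElement_def]; group
    rw [this]
    conv_lhs => rw [show (b' * a') * b⁻¹ * (b' * a')⁻¹ = (a' * b') * b⁻¹ * (a' * b')⁻¹ by rw [e4]]
    group
  rw [e, e1, e3, ee]
  refine mul_mem (mul_mem (F_le_P K ha.memF) (F_le_P K hb.memF)) (mul_mem ?_ ?_)
  · exact factB' ⟨_, _, hb.inv, hb', rfl⟩ ha' (np_r hij h1.symm)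
  · exact factB' ⟨_, _, ha.inv, ha', rfl⟩ hb' (np_r hij.symm h2.symm)

theorem nrmP_long {K : FormIdeal D} {i j : Idx n} {x w g : GLn A n} (hx : Rt K i (Idx.neg i) x)
    (hij : i.1 ≠ j.1)
    (hw : Rt (top D) (Idx.neg i) i w) (hg : Rt (top D) i (Idx.neg i) g) :
    g * (w * x * w⁻¹) * g⁻¹ ∈ P n K := by
  obtain ⟨p, y, t, hp, hy, ht, rfl⟩ := dec_long hx hij
  have hw' : Rt (top D) (Idx.neg i) (Idx.neg (Idx.neg i)) w := by rwa [Idx.neg_neg]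
  have hq : (g * w) * p * (g * w)⁻¹ ∈ P n K := by
    have e1 : ind j i = 0 := by
      have a1 : i ≠ j := dn hij
      have a2 : i ≠ Idx.neg j := dn hij
      simp only [ind, a1, a2]; simp
    have e2 : ind j (Idx.neg i) = 0 := by rw [ind_odd j i, e1, neg_zero]
    have e3 : ind j j = 1 := by
      have a1 := ne_neg j
      simp only [ind, a1]; simp
    have hB : g * w ∈ B D (ind j) := mul_mem (hg.memB (by rw [e1, e2])) (hw.memB (by rw [e1, e2]))
    exact F_le_P K (U_le_F K _ (nrm_U K (ind_odd j) _ hB _ (hp.memU (by rw [e2, e3]; norm_num))))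
  have cy1 : g * y = y * g := comm_eq_one (comm0'' hg hy (dn hij))
  have cy2 : w * y = y * w := comm_eq_one (comm0'' hw' hy (dn hij))
  replace ht := ht.flip
  rw [Idx.neg_neg, Idx.neg_neg] at ht
  obtain ⟨a, q, ha, hq1, ewt⟩ := chain_long (prodle_top (top D)) hw'
    (by rwa [Idx.neg_neg]) (l := j) (dn hij) (dn hij)
  obtain ⟨a', q', ha', hq', ega⟩ := chain_long (prodle_top (top D)) hg ha (dn hij) (dn hij)
  have hqn : Rt (top D) (Idx.neg j) (Idx.neg (Idx.neg j)) q := by rwa [Idx.neg_neg]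
  have hqn' : Rt (top D) (Idx.neg j) (Idx.neg (Idx.neg j)) q' := by rwa [Idx.neg_neg]
  have c1 : g * q = q * g := comm_eq_one (comm0'' hg hqn (dn hij))
  have c2 : g * t = t * g := comm_eq_one (comm0' hg ht hij (ne_neg i) (dn hij))
  have c3 : q' * a = a * q' := comm_eq_one (comm0' hqn' ha hij (dn hij.symm) (Idx.neg_ne j))
  have c4 : q' * t = t * q' := comm_eq_one (comm0' hqn' ht hij (dn hij.symm) (Idx.neg_ne j))
  have c5 : q * t = t * q := comm_eq_one (comm0' hqn ht hij (dn hij.symm) (Idx.neg_ne j))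
  have hc : Rt (top D) (Idx.neg j) j ⁅a, t⁆ := by
    have haf := ha.flip
    rw [Idx.neg_neg] at haf
    exact chain_short (prodle_top (top D)) haf ht (dn hij.symm) (dn hij) (Idx.neg_ne j)
  have hcn : Rt (top D) (Idx.neg j) (Idx.neg (Idx.neg j)) ⁅a, t⁆ := by rwa [Idx.neg_neg]
  have c6 : ⁅a, t⁆ * a = a * ⁅a, t⁆ :=
    comm_eq_one (comm0' hcn ha hij (dn hij.symm) (Idx.neg_ne j))
  have c7 : ⁅a, t⁆ * t = t * ⁅a, t⁆ :=
    comm_eq_one (comm0' hcn ht hij (dn hij.symm) (Idx.neg_ne j))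
  have e5 : (g * w) * t * (g * w)⁻¹ = ((a' * t) * a) * (⁅a, t⁆ * q' * q) := by
    calc (g * w) * t * (g * w)⁻¹ = g * (⁅w, t⁆ * t) * g⁻¹ := by
          rw [commutatorElement_def]; group
      _ = (g * a * g⁻¹) * (g * q) * (t * g⁻¹) := by rw [ewt]; group
      _ = (g * a * g⁻¹) * q * (g * t) * g⁻¹ := by rw [c1]; group
      _ = (g * a * g⁻¹) * q * t := by rw [c2]; group
      _ = a' * (q' * a) * (q * t) := by rw [conj_eq, ega]; group
      _ = a' * a * (q' * t) * q := by rw [c3, c5]; group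
      _ = a' * (a * t) * q' * q := by rw [c4]; group
      _ = a' * (⁅a, t⁆ * t * a) * q' * q := by rw [commutatorElement_def]; group
      _ = a' * (t * (⁅a, t⁆ * a)) * q' * q := by rw [c7]; group
      _ = _ := by rw [c6]; group
  have e6 : g * (w * (p * ⁅y, t⁆) * w⁻¹) * g⁻¹ =
      ((g * w) * p * (g * w)⁻¹) * ⁅(g * w) * y * (g * w)⁻¹, (g * w) * t * (g * w)⁻¹⁆ := by
    simp only [commutatorElement_def]; group
  have e7 : (g * w) * y * (g * w)⁻¹ = y := by
    rw [mul_assoc g w y, cy2, ← mul_assoc, cy1]; group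
  rw [e6, e7, e5]
  refine mul_mem hq ?_
  have e8 : ⁅y, ((a' * t) * a) * (⁅a, t⁆ * q' * q)⁆ = y * (((a' * t) * a) *
      ((⁅a, t⁆ * q' * q) * y⁻¹ * (⁅a, t⁆ * q' * q)⁻¹) * ((a' * t) * a)⁻¹) := by
    generalize ⁅a, t⁆ = r
    simp only [commutatorElement_def]; group
  rw [e8]
  refine mul_mem (F_le_P K hy.memF) ?_
  exact factC ⟨_, _, hy.inv, (hc.mul hq').mul hq1, rfl⟩ ha (np_l hij hij) (ha'.mul ht) (np_l hij hij)

theorem nrmP (hn : 3 ≤ n) (K : FormIdeal D) : Nrm (Fr n D.top) (P n K) := by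
  refine nrm_closure2 ?_ ?_
  · rintro s ⟨i, j, hs⟩
    exact ⟨i, j, hs.inv⟩
  rintro g ⟨k, l, hg⟩ z ⟨i, j, x, w, hx, hw, rfl⟩
  by_cases h : NP i j k l
  · exact factB' ⟨x, w, hx, hw, rfl⟩ hg h
  have hwcase : ∀ g, Rt (top D) j i g → g * (w * x * w⁻¹) * g⁻¹ ∈ P n K := by
    intro g hg
    exact Zt.memP ⟨x, g * w, hx, hg.mul hw, by group⟩
  have hxcase : ∀ g, Rt (top D) i j g → g * (w * x * w⁻¹) * g⁻¹ ∈ P n K := by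
    intro g hg
    obtain ⟨k, h1, h2⟩ := exk hn i j
    by_cases h : j = Idx.neg i
    · subst h
      exact nrmP_long hx h1.symm hw hg
    · have hij : i.1 ≠ j.1 := dn' hx.ne (fun e => h (by rw [e, Idx.neg_neg]))
      exact nrmP_short hx hij h1 h2 hw hg
  have : (k = i ∧ l = j) ∨ (k = Idx.neg j ∧ l = Idx.neg i) ∨
      (k = j ∧ l = i) ∨ (k = Idx.neg i ∧ l = Idx.neg j) := by unfold NP at h; tauto
  have hgf := hg.flip
  rcases this with ⟨rfl, rfl⟩ | ⟨rfl, rfl⟩ | ⟨rfl, rfl⟩ | ⟨rfl, rfl⟩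
  · exact hxcase g hg
  · rw [Idx.neg_neg, Idx.neg_neg] at hgf; exact hxcase g hgf
  · exact hwcase g hg
  · rw [Idx.neg_neg, Idx.neg_neg] at hgf; exact hwcase g hgf

theorem EU_le_P (hn : 3 ≤ n) (K : FormIdeal D) : D.EU n K.I K.Gamma ≤ P n K := by
  unfold EU
  rw [Subgroup.closure_le, EUmax_eq, transvGen_eq]
  rintro x ⟨g, hg, t, ⟨i, j, ht⟩, rfl⟩
  exact nrmP hn K g hg t ht.zt.memP

theorem F_le_EU (K : FormIdeal D) : Fr n K ≤ D.EU n K.I K.Gamma := by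
  unfold Fr EU
  rw [Subgroup.closure_le, transvGen_eq]
  rintro x hx
  exact Subgroup.subset_closure ⟨1, one_mem _, x, hx, by simp⟩

theorem EU_le_E (K : FormIdeal D) : D.EU n K.I K.Gamma ≤ Fr n D.top := by
  unfold EU
  rw [Subgroup.closure_le, EUmax_eq, transvGen_eq]
  rintro x ⟨g, hg, t, ⟨i, j, ht⟩, rfl⟩
  exact mul_mem (mul_mem hg ht.memE) (inv_mem hg)

end FormRingData

set_option linter.unusedSimpArgs false
set_option linter.unusedVariables false

namespace FormRingData

variable {A : Type*} [Ring A] {n : ℕ} {D : FormRingData A}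

/-- symmetrised product ideal -/
def symI0 (K L : FormIdeal D) : AddSubgroup A :=
  AddSubgroup.closure {x | ∃ a ∈ K.I, ∃ b ∈ L.I, x = a * b ∨ x = b * a}

/-- symmetrised relative form parameter -/
def symG0 (K L : FormIdeal D) : AddSubgroup A :=
  AddSubgroup.closure ({x | ∃ a ∈ symI0 K L, x = a - D.lam * D.bar a} ∪
    ({x | ∃ b ∈ L.I, ∃ g ∈ K.Gamma, x = b * g * D.bar b} ∪
     {x | ∃ a ∈ K.I, ∃ g ∈ L.Gamma, x = a * g * D.bar a}))

theorem symI0_ab {K L : FormIdeal D} {a b : A} (ha : a ∈ K.I) (hb : b ∈ L.I) :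
    a * b ∈ symI0 K L := AddSubgroup.subset_closure ⟨a, ha, b, hb, Or.inl rfl⟩

theorem symI0_ba {K L : FormIdeal D} {a b : A} (ha : a ∈ K.I) (hb : b ∈ L.I) :
    b * a ∈ symI0 K L := AddSubgroup.subset_closure ⟨a, ha, b, hb, Or.inr rfl⟩

theorem symI0_left {K L : FormIdeal D} (c x : A) (hx : x ∈ symI0 K L) : c * x ∈ symI0 K L := by
  induction hx using AddSubgroup.closure_induction with
  | mem x hx =>
    obtain ⟨a, ha, b, hb, rfl | rfl⟩ := hx
    · rw [← mul_assoc]; exact symI0_ab (K.mul_mem_left c a ha) hb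
    · rw [← mul_assoc]; exact symI0_ba ha (L.mul_mem_left c b hb)
  | zero => rw [mul_zero]; exact zero_mem _
  | add x y _ _ hx hy => rw [mul_add]; exact add_mem hx hy
  | neg x _ hx => rw [mul_neg]; exact neg_mem hx

theorem symI0_right {K L : FormIdeal D} (c x : A) (hx : x ∈ symI0 K L) : x * c ∈ symI0 K L := by
  induction hx using AddSubgroup.closure_induction with
  | mem x hx =>
    obtain ⟨a, ha, b, hb, rfl | rfl⟩ := hx
    · rw [mul_assoc]; exact symI0_ab ha (L.mul_mem_right c b hb)
    · rw [mul_assoc]; exact symI0_ba (K.mul_mem_right c a ha) hb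
  | zero => rw [zero_mul]; exact zero_mem _
  | add x y _ _ hx hy => rw [add_mul]; exact add_mem hx hy
  | neg x _ hx => rw [neg_mul]; exact neg_mem hx

theorem symI0_bar {K L : FormIdeal D} (x : A) (hx : x ∈ symI0 K L) : D.bar x ∈ symI0 K L := by
  induction hx using AddSubgroup.closure_induction with
  | mem x hx =>
    obtain ⟨a, ha, b, hb, rfl | rfl⟩ := hx
    · rw [D.bar_mul]; exact symI0_ba (K.bar_mem a ha) (L.bar_mem b hb)
    · rw [D.bar_mul]; exact symI0_ab (K.bar_mem a ha) (L.bar_mem b hb)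
  | zero => rw [map_zero]; exact zero_mem _
  | add x y _ _ hx hy => rw [map_add]; exact add_mem hx hy
  | neg x _ hx => rw [map_neg]; exact neg_mem hx

theorem gamma_min_conj (K : FormIdeal D) {a c : A} (ha : a ∈ K.I) (hc : c ∈ D.Lambda) :
    a * c * D.bar a ∈ K.Gamma :=
  K.gammaMin_le (AddSubgroup.subset_closure (Or.inr ⟨a, ha, c, hc, rfl⟩))

theorem symG0_conj {K L : FormIdeal D} {c : A} (hc : c ∈ D.Lambda) (x : A) (hx : x ∈ symI0 K L) :
    x * c * D.bar x ∈ symG0 K L := by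
  induction hx using AddSubgroup.closure_induction with
  | mem x hx =>
    obtain ⟨a, ha, b, hb, rfl | rfl⟩ := hx
    · refine AddSubgroup.subset_closure (Or.inr (Or.inr ⟨a, ha, _, gamma_min_conj L hb hc, ?_⟩))
      rw [D.bar_mul]; simp only [mul_assoc]
    · refine AddSubgroup.subset_closure (Or.inr (Or.inl ⟨b, hb, _, gamma_min_conj K ha hc, ?_⟩))
      rw [D.bar_mul]; simp only [mul_assoc]
  | zero => rw [zero_mul, zero_mul]; exact zero_mem _
  | add x y mx my hx hy =>
    have h : x * c * D.bar y - D.lam * D.bar (x * c * D.bar y) ∈ symG0 K L := by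
      refine AddSubgroup.subset_closure (Or.inl ⟨_, ?_, rfl⟩)
      exact symI0_right _ _ (symI0_right _ _ mx)
    have e : y * c * D.bar x = - (D.lam * D.bar (x * c * D.bar y)) := by
      conv_lhs => rw [D.lambdaMax_mem c hc]
      rw [D.bar_mul, D.bar_mul, D.bar_bar, mul_neg, neg_mul, ← mul_assoc y, ← D.lam_comm y]
      simp only [mul_assoc]
    have e2 : (x + y) * c * D.bar (x + y) = x * c * D.bar x + y * c * D.bar y +
        (x * c * D.bar y - D.lam * D.bar (x * c * D.bar y)) := by
      rw [sub_eq_add_neg, ← e, map_add]; noncomm_ring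
    rw [e2]
    exact add_mem (add_mem hx hy) h
  | neg x _ hx =>
    rw [map_neg, neg_mul, neg_mul_neg]; exact hx

/-- the symmetrised product of form ideals -/
def sym (K L : FormIdeal D) : FormIdeal D where
  I := symI0 K L
  Gamma := symG0 K L
  mul_mem_left := symI0_left
  mul_mem_right := symI0_right
  bar_mem := symI0_bar
  gammaMin_le := by
    unfold gammaMin
    rw [AddSubgroup.closure_le]
    rintro x (⟨a, ha, rfl⟩ | ⟨a, ha, c, hc, rfl⟩)
    · exact AddSubgroup.subset_closure (Or.inl ⟨a, ha, rfl⟩)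
    · exact symG0_conj hc a ha
  gamma_le_I := by
    unfold symG0
    rw [AddSubgroup.closure_le]
    rintro x (⟨a, ha, rfl⟩ | ⟨b, hb, g, hg, rfl⟩ | ⟨a, ha, g, hg, rfl⟩)
    · exact sub_mem ha (symI0_left _ _ (symI0_bar _ ha))
    · exact symI0_right _ _ (symI0_ba (K.gamma_le_I hg) hb)
    · exact symI0_right _ _ (symI0_ab ha (L.gamma_le_I hg))
  gamma_le_Lambda := by
    unfold symG0
    rw [AddSubgroup.closure_le]
    rintro x (⟨a, ha, rfl⟩ | ⟨b, hb, g, hg, rfl⟩ | ⟨a, ha, g, hg, rfl⟩)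
    · exact D.lambdaMin_mem a
    · exact D.lambda_conj _ _ (K.gamma_le_Lambda hg)
    · exact D.lambda_conj _ _ (L.gamma_le_Lambda hg)
  gamma_conj c x hx := by
    induction hx using AddSubgroup.closure_induction with
    | mem x hx =>
      rcases hx with (⟨a, ha, rfl⟩ | ⟨b, hb, g, hg, rfl⟩ | ⟨a, ha, g, hg, rfl⟩)
      · refine AddSubgroup.subset_closure (Or.inl ⟨c * a * D.bar c,
          symI0_right _ _ (symI0_left _ _ ha), ?_⟩)
        rw [D.bar_mul, D.bar_mul, D.bar_bar, mul_sub, sub_mul, ← mul_assoc c D.lam, ← D.lam_comm c]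
        simp only [mul_assoc]
      · refine AddSubgroup.subset_closure (Or.inr (Or.inl ⟨c * b, L.mul_mem_left _ _ hb, g, hg, ?_⟩))
        rw [D.bar_mul]; simp only [mul_assoc]
      · refine AddSubgroup.subset_closure (Or.inr (Or.inr ⟨c * a, K.mul_mem_left _ _ ha, g, hg, ?_⟩))
        rw [D.bar_mul]; simp only [mul_assoc]
    | zero => rw [mul_zero, zero_mul]; exact zero_mem _
    | add x y _ _ hx hy => rw [mul_add, add_mul]; exact add_mem hx hy
    | neg x _ hx => rw [mul_neg, neg_mul]; exact neg_mem hx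

theorem prodle_sym (K L : FormIdeal D) : Prodle K L (sym K L) where
  ml a ha b hb := symI0_ab ha hb
  mr a ha b hb := symI0_ba ha hb
  gl g hg b hb := AddSubgroup.subset_closure (Or.inr (Or.inl
    ⟨D.bar b, L.bar_mem b hb, g, hg, by rw [D.bar_bar]⟩))
  gr g hg a ha := AddSubgroup.subset_closure (Or.inr (Or.inr
    ⟨D.bar a, K.bar_mem a ha, g, hg, by rw [D.bar_bar]⟩))

theorem conj_comm_mem {K L : FormIdeal D} {a b c d u v : Idx n} {x y w : GLn A n}
    (hx : Rt K a b x) (hy : Rt L c d y) (hw : Rt (top D) u v w)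
    (n1 : ¬ (a = v ∧ b = u)) (n2 : ¬ (a = Idx.neg u ∧ b = Idx.neg v))
    (n3 : ¬ (c = v ∧ d = u)) (n4 : ¬ (c = Idx.neg u ∧ d = Idx.neg v)) :
    w * ⁅x, y⁆ * w⁻¹ ∈ ⁅Fr n K, Fr n L⁆ := by
  have := Subgroup.commutator_mem_commutator (conj_nonopp hw hx n1 n2) (conj_nonopp hw hy n3 n4)
  convert this using 1
  simp only [commutatorElement_def]; group

theorem conj_comm_mem' {K L : FormIdeal D} {a b c d u v : Idx n} {x y w : GLn A n}
    (hx : Rt L a b x) (hy : Rt K c d y) (hw : Rt (top D) u v w)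
    (n1 : ¬ (a = v ∧ b = u)) (n2 : ¬ (a = Idx.neg u ∧ b = Idx.neg v))
    (n3 : ¬ (c = v ∧ d = u)) (n4 : ¬ (c = Idx.neg u ∧ d = Idx.neg v)) :
    w * ⁅x, y⁆ * w⁻¹ ∈ ⁅Fr n K, Fr n L⁆ := by
  rw [Subgroup.commutator_comm]
  exact conj_comm_mem hx hy hw n1 n2 n3 n4

theorem hshort {K L : FormIdeal D} {i j k u v : Idx n} {w : GLn A n} (hw : Rt (top D) u v w)
    (hij : i.1 ≠ j.1) (h1 : k.1 ≠ i.1) (h2 : k.1 ≠ j.1)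
    (n1 : ¬ (i = v ∧ k = u)) (n2 : ¬ (i = Idx.neg u ∧ k = Idx.neg v))
    (n3 : ¬ (k = v ∧ j = u)) (n4 : ¬ (k = Idx.neg u ∧ j = Idx.neg v))
    {c : A} (hc : c ∈ symI0 K L) :
    w * D.TS i j c * w⁻¹ ∈ ⁅Fr n K, Fr n L⁆ := by
  induction hc using AddSubgroup.closure_induction with
  | mem x hx =>
    obtain ⟨a, ha, b, hb, rfl | rfl⟩ := hx
    · rw [← D.R4 (j := k) (dn h1.symm) (dn h1.symm) (dn h2) (dn h2) (dn hij) (dn hij)]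
      exact conj_comm_mem (rt_short K h1.symm ha) (rt_short L h2 hb) hw n1 n2 n3 n4
    · rw [← D.R4 (j := k) (dn h1.symm) (dn h1.symm) (dn h2) (dn h2) (dn hij) (dn hij)]
      exact conj_comm_mem' (rt_short L h1.symm hb) (rt_short K h2 ha) hw n1 n2 n3 n4
  | zero => rw [TS_zero (dn hij)]; simp
  | add x y _ _ hx hy =>
    rw [D.TS_add (dn hij)]
    convert mul_mem hx hy using 1; group
  | neg x _ hx =>
    rw [TS_neg (dn hij)]
    convert inv_mem hx using 1; group

theorem hlong1 {K L : FormIdeal D} {i k : Idx n} {w : GLn A n} (hw : Rt (top D) (Idx.neg i) i w)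
    (h1 : k.1 ≠ i.1) {c : A} (hc : c ∈ symI0 K L) :
    w * D.TL i (D.s i * (c - D.lam * D.bar c)) * w⁻¹ ∈ ⁅Fr n K, Fr n L⁆ := by
  have n1 : ¬ (i = i ∧ k = Idx.neg i) := fun e => h1 (by rw [e.2]; rfl)
  have n2 : ¬ (i = Idx.neg (Idx.neg i) ∧ k = Idx.neg i) := fun e => h1 (by rw [e.2]; rfl)
  have n3 : ¬ (k = i ∧ Idx.neg i = Idx.neg i) := fun e => h1 (by rw [e.1])
  have n4 : ¬ (k = Idx.neg (Idx.neg i) ∧ Idx.neg i = Idx.neg i) := fun e => h1 (by rw [e.1]; rfl)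
  have key : ∀ a b : A, D.TL i (D.s i * (a * b - D.lam * D.bar (a * b))) =
      ⁅D.TS i k (D.s i * a), D.TS k (Idx.neg i) b⁆ := by
    intro a b
    rw [D.R5 (dn h1.symm) (dn h1.symm), mul_assoc (D.s i) a b, ← mul_assoc (D.bar (D.s i)),
      D.bar_s, one_mul]
  induction hc using AddSubgroup.closure_induction with
  | mem x hx =>
    obtain ⟨a, ha, b, hb, rfl | rfl⟩ := hx
    · rw [key]
      exact conj_comm_mem (rt_short K h1.symm (K.mul_mem_left _ _ ha)) 
        (rt_short L (i := k) (j := Idx.neg i) h1 hb) hw n1 n2 n3 n4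
    · rw [key]
      exact conj_comm_mem' (rt_short L h1.symm (L.mul_mem_left _ _ hb)) (rt_short K (i := k) (j := Idx.neg i) h1 ha) hw
        n1 n2 n3 n4
  | zero => simp [TL_zero]
  | add x y _ _ hx hy =>
    rw [show D.s i * (x + y - D.lam * D.bar (x + y)) = D.s i * (x - D.lam * D.bar x) +
      D.s i * (y - D.lam * D.bar y) by rw [map_add]; noncomm_ring, D.TL_add]
    convert mul_mem hx hy using 1; group
  | neg x _ hx =>
    rw [show D.s i * (-x - D.lam * D.bar (-x)) = -(D.s i * (x - D.lam * D.bar x)) by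
      rw [map_neg]; noncomm_ring, TL_neg]
    convert inv_mem hx using 1; group

theorem sym_comm_I (K L : FormIdeal D) : symI0 K L = symI0 L K := by
  unfold symI0
  congr 1
  ext x
  constructor <;> rintro ⟨a, ha, b, hb, h⟩ <;> exact ⟨b, hb, a, ha, h.symm⟩

theorem hlong2 {K L : FormIdeal D} {i k m : Idx n} {w : GLn A n}
    (hw : Rt (top D) (Idx.neg i) i w)
    (h1 : k.1 ≠ i.1) (h2 : m.1 ≠ i.1) (h3 : m.1 ≠ k.1) {b g : A} (hb : b ∈ L.I)
    (hg : g ∈ K.Gamma) :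
    w * D.TL i (D.s i * (b * g * D.bar b)) * w⁻¹ ∈ ⁅Fr n K, Fr n L⁆ := by
  have hg' := K.Gamma.neg_mem hg
  have e := D.R6 (i := k) (l := Idx.neg i) (dn h1) (dn h1) (-g) (D.bar b)
    (D.lambdaMax_mem _ (K.gamma_le_Lambda hg'))
  rw [Idx.neg_neg, D.bar_bar] at e
  rw [show -(b * -g * D.bar b) = b * g * D.bar b by noncomm_ring] at e
  have a1 : w * D.TS k (Idx.neg i) (D.s k * -g * D.bar b) * w⁻¹ ∈ ⁅Fr n K, Fr n L⁆ := by
    refine hshort (i := k) (j := Idx.neg i) (k := m) hw h1 h3 h2 ?_ ?_ ?_ ?_ ?_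
    · exact fun e => h1 (by rw [e.1])
    · exact fun e => h1 (by rw [e.1]; rfl)
    · exact fun e => h2 (by rw [e.1])
    · exact fun e => h2 (by rw [e.1]; rfl)
    · rw [mul_assoc]
      exact symI0_left _ _ (symI0_ab (K.gamma_le_I hg') (L.bar_mem b hb))
  have a2 := conj_comm_mem (rt_long K k hg')
    (rt_short L (i := Idx.neg k) (j := Idx.neg i) h1 (L.bar_mem b hb)) hw
    (fun e => h1 (by rw [e.1])) (fun e => h1 (by rw [e.1]; rfl))
    (fun e => h1 (by rw [← e.1]; rfl)) (fun e => dn (i := Idx.neg k) (j := Idx.neg (Idx.neg i)) h1 e.1)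
  rw [e] at a2
  convert mul_mem (inv_mem a1) a2 using 1; group

theorem symP_le (hn : 3 ≤ n) (K L : FormIdeal D) : P n (sym K L) ≤ ⁅Fr n K, Fr n L⁆ := by
  unfold P
  rw [Subgroup.closure_le]
  rintro x ⟨i, j, x, w, hx, hw, rfl⟩
  obtain ⟨k, h1, h2⟩ := exk hn i j
  rcases hx with ⟨a1, a2, c, hc, rfl⟩ | ⟨rfl, g, hg, rfl⟩
  · have hij := dn' a1 a2
    refine hshort hw hij h1 h2 ?_ ?_ ?_ ?_ hc
    · exact fun e => h2 (by rw [e.2])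
    · exact fun e => h1 (by rw [e.2]; rfl)
    · exact fun e => h1 (by rw [e.1])
    · exact fun e => h2 (by rw [e.1]; rfl)
  · obtain ⟨m, h3, h4⟩ := exk hn i k
    change g ∈ symG0 K L at hg
    show w * D.TL i (D.s i * g) * w⁻¹ ∈ ⁅Fr n K, Fr n L⁆
    induction hg using AddSubgroup.closure_induction with
    | mem x hx =>
      rcases hx with (⟨a, ha, rfl⟩ | ⟨b, hb, g, hg, rfl⟩ | ⟨a, ha, g, hg, rfl⟩)
      · exact hlong1 hw h1 ha
      · exact hlong2 hw h1 h3 h4 hb hg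
      · rw [Subgroup.commutator_comm]
        exact hlong2 hw h1 h3 h4 ha hg
    | zero => simp [TL_zero]
    | add x y _ _ hx hy =>
      rw [mul_add, D.TL_add]
      convert mul_mem hx hy using 1; group
    | neg x _ hx =>
      rw [mul_neg, TL_neg]
      convert inv_mem hx using 1; group

end FormRingData

set_option linter.unusedSimpArgs false
set_option linter.unusedVariables false

namespace FormRingData

variable {A : Type*} [Ring A] {n : ℕ} {D : FormRingData A}

theorem opp_comm (hn : 3 ≤ n) {K L : FormIdeal D} {i j k l : Idx n} {x y g : GLn A n}
    (hx : Rt K i j x) (hy : Rt L j i y) (hg : Rt (top D) k l g) (h : NP i j k l) :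
    ⁅g, ⁅x, y⁆⁆ ∈ P n (sym K L) := by
  obtain ⟨F, hF, e, lt⟩ := exF hx.ne hg.ne h
  have hM := prodle_sym K L
  have hUP : U (sym K L) F ≤ P n (sym K L) := (U_le_F _ F).trans (F_le_P _)
  have hgU : g ∈ U (top D) F := hg.memU lt
  have f1 : ⁅x⁻¹, g⁆ ∈ U K F := comm_symm_mem (L5 (prodle_top K) hF hgU hx.inv e.ge)
  have f2 : ⁅y⁻¹, g⁆ ∈ U L F := comm_symm_mem (L5 (prodle_top L) hF hgU hy.inv e.le)
  apply comm_symm_mem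
  have := key_comm (nrmP hn (sym K L)) hx.inv.memE hy.inv.memE (g := g)
    (hUP (comm_symm_mem (L5 hM.symm hF f2 hx.inv e.ge)))
    (hUP (comm_symm_mem (L5 hM hF f1 hy.inv e.le)))
    (hUP (L5' hM hF f1 f2))
  rwa [inv_inv, inv_inv] at this

theorem comm_memE {K L : FormIdeal D} {x y : GLn A n} (hx : x ∈ Fr n K) (hy : y ∈ Fr n L) :
    ⁅x, y⁆ ∈ Fr n D.top := by
  have h1 := Fr_le K hx
  have h2 := Fr_le L hy
  rw [commutatorElement_def]
  exact mul_mem (mul_mem (mul_mem h1 h2) (inv_mem h1)) (inv_mem h2)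

theorem opp_central (hn : 3 ≤ n) {K L : FormIdeal D} {i j : Idx n} {x y : GLn A n}
    (hx : Rt K i j x) (hy : Rt L j i y) {g : GLn A n} (hg : g ∈ Fr n D.top) :
    ⁅g, ⁅x, y⁆⁆ ∈ P n (sym K L) := by
  have hN := nrmP hn (sym K L)
  refine comm_ind (S := {x | ∃ i j, Rt (top D) i j x}) hN ?_ hg
  rintro g ⟨k, l, hg⟩
  by_cases h : NP i j k l
  · exact opp_comm hn hx hy hg h
  obtain ⟨p, y', t, ⟨_, _, np1, hp⟩, ⟨_, _, np2, hy'⟩, ⟨_, _, np3, ht⟩, e⟩ := dec hn hg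
  have conv : ∀ {a b : Idx n}, NP k l a b → NP i j a b := by
    intro a b hab
    have : (k = i ∧ l = j) ∨ (k = Idx.neg j ∧ l = Idx.neg i) ∨
      (k = j ∧ l = i) ∨ (k = Idx.neg i ∧ l = Idx.neg j) := by unfold NP at h; tauto
    rcases this with ⟨rfl, rfl⟩ | ⟨rfl, rfl⟩ | ⟨rfl, rfl⟩ | ⟨rfl, rfl⟩ <;>
      unfold NP at hab ⊢ <;> (try simp only [Idx.neg_neg] at hab) <;> tauto
  have c1 : p ∈ cen hN ⁅x, y⁆ := ⟨hp.memE, opp_comm hn hx hy hp (conv np1)⟩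
  have c2 : y' ∈ cen hN ⁅x, y⁆ := ⟨hy'.memE, opp_comm hn hx hy hy' (conv np2)⟩
  have c3 : t ∈ cen hN ⁅x, y⁆ := ⟨ht.memE, opp_comm hn hx hy ht (conv np3)⟩
  have : p * ⁅y', t⁆ ∈ cen hN ⁅x, y⁆ := by
    rw [commutatorElement_def y' t]
    exact mul_mem c1 (mul_mem (mul_mem (mul_mem c2 c3) (inv_mem c2)) (inv_mem c3))
  rw [e]
  exact this.2

theorem gen_central (hn : 3 ≤ n) {K L : FormIdeal D} {i j k l : Idx n} {x y : GLn A n}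
    (hx : Rt K i j x) (hy : Rt L k l y) {g : GLn A n} (hg : g ∈ Fr n D.top) :
    ⁅g, ⁅x, y⁆⁆ ∈ P n (sym K L) := by
  by_cases h3 : k = j ∧ l = i
  · obtain ⟨rfl, rfl⟩ := h3
    exact opp_central hn hx hy hg
  by_cases h4 : k = Idx.neg i ∧ l = Idx.neg j
  · obtain ⟨rfl, rfl⟩ := h4
    have := hy.flip
    rw [Idx.neg_neg, Idx.neg_neg] at this
    exact opp_central hn hx this hg
  have h := F_le_P _ (comm_nonopp (prodle_sym K L) hx hy h3 h4)
  rw [commutatorElement_def g]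
  exact mul_mem (nrmP hn _ g hg _ h) (inv_mem h)

/-- centre of `E` modulo `N` -/
def Zc {G : Type*} [Group G] {E N : Subgroup G} (h : Nrm E N) : Subgroup G where
  carrier := {x | x ∈ E ∧ ∀ g ∈ E, ⁅x, g⁆ ∈ N}
  one_mem' := ⟨one_mem _, fun g hg => ((cen h g).one_mem).2⟩
  mul_mem' ha hb := ⟨mul_mem ha.1 hb.1, fun g hg =>
    ((cen h g).mul_mem ⟨ha.1, ha.2 g hg⟩ ⟨hb.1, hb.2 g hg⟩).2⟩
  inv_mem' ha := ⟨inv_mem ha.1, fun g hg => ((cen h g).inv_mem ⟨ha.1, ha.2 g hg⟩).2⟩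

theorem nrm_Zc {G : Type*} [Group G] {E N : Subgroup G} (h : Nrm E N) (hNE : N ≤ E) :
    Nrm E (Zc h) := by
  rintro g hg x ⟨hx, hx'⟩
  rw [conj_eq]
  refine (Zc h).mul_mem ?_ ⟨hx, hx'⟩
  have : ⁅g, x⁆ ∈ N := comm_symm_mem (hx' g hg)
  refine ⟨hNE this, fun g' hg' => ?_⟩
  apply comm_symm_mem
  rw [commutatorElement_def g']
  exact mul_mem (h g' hg' _ this) (inv_mem this)

theorem part1 (hn : 3 ≤ n) (K L : FormIdeal D) : Nrm (Fr n D.top) ⁅Fr n K, Fr n L⁆ := by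
  have hN := nrmP hn (sym K L)
  have hZ := nrm_Zc hN (P_le_E _)
  have hle : ⁅Fr n K, Fr n L⁆ ≤ Zc hN := by
    rw [Subgroup.commutator_le]
    intro x hx y hy
    refine comm_ind (hZ.mono (Fr_le K)) ?_ hx
    rintro x ⟨i, j, hx⟩
    apply comm_symm_mem
    refine comm_ind (hZ.mono (Fr_le L)) ?_ hy
    rintro y ⟨k, l, hy⟩
    apply comm_symm_mem
    exact ⟨comm_memE hx.memF hy.memF, fun g hg => comm_symm_mem (gen_central hn hx hy hg)⟩
  intro g hg x hx
  rw [conj_eq]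
  exact mul_mem (symP_le hn K L (comm_symm_mem ((hle hx).2 g hg))) hx

theorem zt_comm1 (hn : 3 ≤ n) {K L : FormIdeal D} {i j k l : Idx n} {z y : GLn A n}
    (hz : Zt K i j z) (hy : Rt L k l y) (h1 : ¬ (k = i ∧ l = j))
    (h2 : ¬ (k = Idx.neg j ∧ l = Idx.neg i)) : ⁅z, y⁆ ∈ ⁅Fr n K, Fr n L⁆ := by
  obtain ⟨x, w, hx, hw, rfl⟩ := hz
  have a := conj_nonopp hw.inv hy h1 h2
  have := part1 hn K L w hw.memE _ (Subgroup.commutator_mem_commutator hx.memF a)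
  convert this using 1
  simp only [commutatorElement_def]; group

theorem zt_comm2 (hn : 3 ≤ n) {K L : FormIdeal D} {i j : Idx n} {z y : GLn A n}
    (hz : Zt K i j z) (hy : Rt L i j y) : ⁅z, y⁆ ∈ ⁅Fr n K, Fr n L⁆ := by
  have hH := part1 hn K L
  obtain ⟨p, y', t, ⟨_, _, np1, hp⟩, ⟨_, _, np2, hy'⟩, ⟨_, _, np3, ht⟩, e⟩ := dec hn hy
  have m1 := zt_comm1 hn hz hp np1.1 np1.2.1
  have m2 := zt_comm1 hn hz hy' np2.1 np2.2.1
  have hf : ⁅z, t⁆ ∈ Fr n K := by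
    obtain ⟨x, w, hx, hw, rfl⟩ := hz
    exact comm_symm_mem (L6 hx hw ht np3)
  have hq : ⁅y', t⁆ ∈ Fr n L := by
    rw [show ⁅y', t⁆ = p⁻¹ * y by rw [e]; group]
    exact mul_mem (inv_mem hp.memF) hy.memF
  have hE : ⁅y', t⁆ * (⁅z, t⁆ * t) ∈ Fr n D.top :=
    mul_mem (Fr_le L hq) (mul_mem (Fr_le K hf) ht.memE)
  have mq : ⁅z, ⁅y', t⁆⁆ ∈ ⁅Fr n K, Fr n L⁆ := by
    have b1 : ⁅y', ⁅z, t⁆⁆ ∈ ⁅Fr n K, Fr n L⁆ :=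
      comm_symm_mem (Subgroup.commutator_mem_commutator hf hy'.memF)
    have b2 : ⁅⁅z, t⁆, ⁅y', t⁆⁆ ∈ ⁅Fr n K, Fr n L⁆ := Subgroup.commutator_mem_commutator hf hq
    have := mul_mem (mul_mem (mul_mem m2 b1) b2) (hH _ hE _ (inv_mem m2))
    convert this using 1
    simp only [commutatorElement_def]; group
  have hze : z ∈ Fr n D.top := P_le_E K hz.memP
  have c1 : p ∈ cen hH z := ⟨hp.memE, comm_symm_mem m1⟩
  have c2 : ⁅y', t⁆ ∈ cen hH z := ⟨Fr_le L hq, comm_symm_mem mq⟩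
  rw [e]
  exact comm_symm_mem (mul_mem c1 c2).2

theorem zt_comm (hn : 3 ≤ n) {K L : FormIdeal D} {i j k l : Idx n} {z y : GLn A n}
    (hz : Zt K i j z) (hy : Rt L k l y) : ⁅z, y⁆ ∈ ⁅Fr n K, Fr n L⁆ := by
  by_cases h1 : k = i ∧ l = j
  · obtain ⟨rfl, rfl⟩ := h1
    exact zt_comm2 hn hz hy
  by_cases h2 : k = Idx.neg j ∧ l = Idx.neg i
  · obtain ⟨rfl, rfl⟩ := h2
    have := hy.flip
    rw [Idx.neg_neg, Idx.neg_neg] at this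
    exact zt_comm2 hn hz this
  exact zt_comm1 hn hz hy h1 h2

theorem part2 (hn : 3 ≤ n) (K L : FormIdeal D) :
    ⁅D.EU n K.I K.Gamma, D.EU n L.I L.Gamma⁆ ≤ ⁅Fr n K, Fr n L⁆ := by
  have hH := part1 hn K L
  rw [Subgroup.commutator_le]
  intro u hu v hv
  replace hu := EU_le_P hn K hu
  apply comm_symm_mem
  refine comm_ind (hH.mono (EU_le_E L)) ?_ hv
  rintro v ⟨g, hg, y, hy, rfl⟩
  rw [EUmax_eq] at hg
  rw [transvGen_eq] at hy
  obtain ⟨k, l, hy⟩ := hy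
  have hu' : g⁻¹ * u * g ∈ P n K := (nrmP hn K).inv_conj hg hu
  have h1 : ⁅g⁻¹ * u * g, y⁆ ∈ ⁅Fr n K, Fr n L⁆ := by
    refine comm_ind (hH.mono (P_le_E K)) ?_ hu'
    rintro z ⟨i, j, hz⟩
    exact zt_comm hn hz hy
  have h2 := hH g hg _ (inv_mem h1)
  convert h2 using 1
  simp only [commutatorElement_def]; group

end FormRingData

/-- Theorem 2: `[FU(2n,I,Γ), FU(2n,J,Δ)]` is normal in `EU(2n,A,Λ)` and equals
`[EU(2n,I,Γ), EU(2n,J,Δ)]`. -/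
theorem statement1 {A : Type*} [Ring A] (D : FormRingData A) (n : ℕ) (hn : 3 ≤ n)
    (FI FJ : FormIdeal D) :
    (∀ g ∈ D.EUmax n, ∀ x ∈ ⁅D.FU n FI.I FI.Gamma, D.FU n FJ.I FJ.Gamma⁆,
        g * x * g⁻¹ ∈ ⁅D.FU n FI.I FI.Gamma, D.FU n FJ.I FJ.Gamma⁆) ∧
      ⁅D.FU n FI.I FI.Gamma, D.FU n FJ.I FJ.Gamma⁆ =
        ⁅D.EU n FI.I FI.Gamma, D.EU n FJ.I FJ.Gamma⁆ := by
  rw [FormRingData.FU_eq, FormRingData.FU_eq, FormRingData.EUmax_eq]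
  refine ⟨FormRingData.part1 hn FI FJ, le_antisymm ?_ (FormRingData.part2 hn FI FJ)⟩
  exact Subgroup.commutator_mono (FormRingData.F_le_EU FI) (FormRingData.F_le_EU FJ)
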